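/- arXiv:2111.12426 — 4 statements merged into one kernel-verified Lean document; each statement's English description precedes it below -/
import Mathlib

section
/- For nonnegative integers n, the dual Cauchy identity holds: the sum over all partitions λ contained in an n×k rectangle of s_λ(x_1,...,x_n)·s_{λ'}(y_1,...,y_k) equals ∏_{i=1}^{n} ∏_{j=1}^{k} (1 + x_i y_j), where s_λ denotes the Schur polynomial and λ' the conjugate partition. -/
open Finset

noncomputable section
open scoped Classical

/-- `T` is a semistandard Young tableau of shape with row lengths `r` and entries in
`Fin N` (representing `{1, …, N}`): rows weakly increase, columns strictly increase. -/
def IsSsyt {m N : ℕ} (r : Fin m → ℕ) (T : ∀ i : Fin m, Fin (r i) → Fin N) : Prop :=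
  (∀ (i : Fin m) (j j' : Fin (r i)), (j : ℕ) ≤ (j' : ℕ) → T i j ≤ T i j') ∧
  (∀ (i i' : Fin m) (j : Fin (r i)) (j' : Fin (r i')),
    i < i' → (j : ℕ) = (j' : ℕ) → T i j < T i' j')

/-- The finite set of semistandard Young tableaux of shape `r` with entries in `Fin N`. -/
def ssytFinset (N : ℕ) {m : ℕ} (r : Fin m → ℕ) :
    Finset (∀ i : Fin m, Fin (r i) → Fin N) :=
  Finset.univ.filter (fun T => IsSsyt r T)

/-- The Schur polynomial `s_r(x_1, …, x_N)` as the generating function of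
semistandard Young tableaux of shape `r`. -/
def schurPoly {R : Type*} [CommRing R] (N : ℕ) {m : ℕ} (r : Fin m → ℕ) (x : Fin N → R) : R :=
  ∑ T ∈ ssytFinset N r, ∏ i : Fin m, ∏ j : Fin (r i), x (T i j)

/-!
Removing the largest letter from a semistandard tableau removes a horizontal strip from its shape,
which gives the branching rule
`s_r(x_1, …, x_{N+1}) = ∑_s x_{N+1} ^ (|r| - |s|) * s_s(x_1, …, x_N)`, the sum being over the `s`
with `N` rows that interlace `r`. Conjugation turns it into a rule for `s_{l'}(y)` in which vertical
strips are removed from `l`.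

Adding a horizontal strip, weighted by `x`, and removing a vertical one, weighted by `y`, commute up
to the factor `1 + x * y`. Indeed both sums are products over the rows, and the factor `1 + x * y`
travels from each row to the next: it enters above the first row and is absorbed by the last one.
Moving one variable `x` past all the `y_j` yields a Pieri-type rule, and induction on the number of
variables `x_i` yields the identity.
-/

namespace DualCauchy

section Shapes

/-- The partitions contained in the `n × k` rectangle, as weakly decreasing sequences of `n` row
lengths (trailing zeros allowed). -/
def boxPartitions (n k : ℕ) : Finset (Fin n → ℕ) :=
  {l ∈ Fintype.piFinset fun _ ↦ Iic k | Antitone l}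

/-- `r / s` is a horizontal strip, for a shape `r` with one more row than `s`: the row lengths
interlace as in two consecutive rows of a Gelfand–Tsetlin pattern. -/
def Interlaces {n : ℕ} (s : Fin n → ℕ) (r : Fin (n + 1) → ℕ) : Prop :=
  ∀ i, r i.succ ≤ s i ∧ s i ≤ r i.castSucc

/-- `l / m` is a vertical strip: it has at most one cell in each row. -/
def IsVerticalStrip {n : ℕ} (m l : Fin n → ℕ) : Prop :=
  ∀ i, m i ≤ l i ∧ l i ≤ m i + 1

/-- The first `k` column lengths of the shape with row lengths `l`, which are all of them when
`l` has at most `k` columns. -/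
def conjugate {n : ℕ} (k : ℕ) (l : Fin n → ℕ) : Fin k → ℕ :=
  fun j ↦ #{i | (j : ℕ) < l i}

variable {n k : ℕ}

theorem mem_boxPartitions {l : Fin n → ℕ} :
    l ∈ boxPartitions n k ↔ (∀ i, l i ≤ k) ∧ Antitone l := by
  simp only [boxPartitions, mem_filter, Fintype.mem_piFinset, mem_Iic]

theorem boxPartitions_zero_right : boxPartitions n 0 = {0} :=
  eq_singleton_iff_unique_mem.mpr
    ⟨mem_boxPartitions.mpr ⟨fun _ ↦ le_rfl, antitone_const⟩,
      fun _ hl ↦ funext fun i ↦ Nat.le_zero.mp ((mem_boxPartitions.mp hl).1 i)⟩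

theorem boxPartitions_zero_left : boxPartitions 0 k = {0} :=
  eq_singleton_iff_unique_mem.mpr
    ⟨mem_boxPartitions.mpr ⟨fun i ↦ i.elim0, antitone_const⟩, fun _ _ ↦ Subsingleton.elim _ _⟩

theorem Interlaces.antitone_right {s : Fin n → ℕ} {r : Fin (n + 1) → ℕ} (h : Interlaces s r) :
    Antitone r :=
  Fin.antitone_iff_succ_le.mpr fun i ↦ (h i).1.trans (h i).2

theorem Interlaces.antitone_left {s : Fin n → ℕ} {r : Fin (n + 1) → ℕ} (h : Interlaces s r) :
    Antitone s := by
  intro i j hij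
  rcases hij.eq_or_lt with rfl | hlt
  · exact le_rfl
  · calc s j ≤ r j.castSucc := (h j).2
      _ ≤ r i.succ := h.antitone_right (Fin.succ_le_castSucc_iff.mpr hlt)
      _ ≤ s i := (h i).1

theorem Interlaces.mem_boxPartitions {s : Fin n → ℕ} {r : Fin (n + 1) → ℕ} (h : Interlaces s r)
    (hr : r ∈ boxPartitions (n + 1) k) : s ∈ boxPartitions n k :=
  DualCauchy.mem_boxPartitions.mpr
    ⟨fun i ↦ (h i).2.trans ((DualCauchy.mem_boxPartitions.mp hr).1 _), h.antitone_left⟩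

theorem le_iff_forall_fin_lt {a b : ℕ} (ha : a ≤ k) :
    a ≤ b ↔ ∀ j : Fin k, (j : ℕ) < a → (j : ℕ) < b :=
  ⟨fun hab _ hj ↦ hj.trans_le hab,
    fun h ↦ le_of_forall_lt fun j hj ↦ h ⟨j, hj.trans_le ha⟩ hj⟩

theorem lt_conjugate_iff {l : Fin n → ℕ} (hl : Antitone l) (i : Fin n) (j : Fin k) :
    (i : ℕ) < conjugate k l j ↔ (j : ℕ) < l i :=
  Tuple.lt_card_gt_iff_apply_gt_of_antitone hl

theorem conjugate_le (l : Fin n → ℕ) (j : Fin k) : conjugate k l j ≤ n :=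
  card_finset_fin_le _

theorem antitone_conjugate (l : Fin n → ℕ) : Antitone (conjugate k l) := fun _ _ hj ↦
  card_le_card <| monotone_filter_right _ fun _ _ hi ↦ (Fin.val_le_of_le hj).trans_lt hi

theorem conjugate_mem_boxPartitions (l : Fin n → ℕ) : conjugate k l ∈ boxPartitions k n :=
  mem_boxPartitions.mpr ⟨conjugate_le l, antitone_conjugate l⟩

theorem conjugate_zero : conjugate k (0 : Fin n → ℕ) = 0 := by
  ext j
  simp [conjugate]

theorem conjugate_conjugate {l : Fin n → ℕ} (hl : l ∈ boxPartitions n k) :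
    conjugate n (conjugate k l) = l := by
  obtain ⟨hlk, hl⟩ := mem_boxPartitions.mp hl
  have lt_iff (i : Fin n) (j : Fin k) : (j : ℕ) < conjugate n (conjugate k l) i ↔ (j : ℕ) < l i :=
    (lt_conjugate_iff (antitone_conjugate l) j i).trans (lt_conjugate_iff hl i j)
  ext i
  apply le_antisymm
  · exact (le_iff_forall_fin_lt (conjugate_le _ i)).mpr fun j ↦ (lt_iff i j).mp
  · exact (le_iff_forall_fin_lt (hlk i)).mpr fun j ↦ (lt_iff i j).mpr

theorem sum_conjugate {l : Fin n → ℕ} (hl : ∀ i, l i ≤ k) :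
    ∑ j, conjugate k l j = ∑ i, l i := by
  simp only [conjugate, card_filter]
  rw [sum_comm]
  refine sum_congr rfl fun i _ ↦ ?_
  rw [← card_filter, Fin.card_filter_val_lt, min_eq_right (hl i)]

theorem conjugate_le_conjugate_iff {k' : ℕ} {l m : Fin n → ℕ} (hl : Antitone l) (hm : Antitone m)
    (j : Fin k) (j' : Fin k') :
    conjugate k m j ≤ conjugate k' l j' ↔ ∀ i, (j : ℕ) < m i → (j' : ℕ) < l i := by
  simp only [le_iff_forall_fin_lt (conjugate_le m j), lt_conjugate_iff hm, lt_conjugate_iff hl]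

theorem interlaces_conjugate_iff {l m : Fin n → ℕ} (hl : l ∈ boxPartitions n (k + 1))
    (hm : m ∈ boxPartitions n k) :
    Interlaces (conjugate k m) (conjugate (k + 1) l) ↔ IsVerticalStrip m l := by
  obtain ⟨hlk, hl⟩ := mem_boxPartitions.mp hl
  obtain ⟨hmk, hm⟩ := mem_boxPartitions.mp hm
  have le_iff (i : Fin n) : m i ≤ l i ↔ ∀ j : Fin k, (j : ℕ) < m i → (j : ℕ) < l i :=
    le_iff_forall_fin_lt (hmk i)
  have le_succ_iff (i : Fin n) :
      l i ≤ m i + 1 ↔ ∀ j : Fin k, (j : ℕ) + 1 < l i → (j : ℕ) < m i := by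
    rw [← Nat.sub_le_iff_le_add, le_iff_forall_fin_lt (Nat.sub_le_of_le_add (hlk i))]
    simp only [Nat.lt_sub_iff_add_lt]
  simp only [Interlaces, IsVerticalStrip, conjugate_le_conjugate_iff hl hm,
    conjugate_le_conjugate_iff hm hl, le_iff, le_succ_iff, Fin.val_succ, Fin.val_castSucc,
    forall_and]
  rw [and_comm, forall_comm, forall_comm (α := Fin k)]

theorem sum_boxPartitions_conjugate {M : Type*} [AddCommMonoid M] (f : (Fin k → ℕ) → M) :
    ∑ m ∈ boxPartitions n k, f (conjugate k m) = ∑ s ∈ boxPartitions k n, f s :=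
  sum_nbij' (conjugate k) (conjugate n) (fun m _ ↦ conjugate_mem_boxPartitions m)
    (fun s _ ↦ conjugate_mem_boxPartitions s) (fun _ ↦ conjugate_conjugate)
    (fun _ ↦ conjugate_conjugate) (fun _ _ ↦ rfl)

end Shapes

section Exchange

variable {R : Type*} [CommSemiring R] {n k : ℕ}

theorem pow_sum_sub_sum_of_le (z : R) {l m : Fin n → ℕ} (h : ∀ i, m i ≤ l i) :
    z ^ (∑ i, l i - ∑ i, m i) = ∏ i, z ^ (l i - m i) := by
  rw [prod_pow_eq_pow_sum, sum_tsub_distrib _ fun i _ ↦ h i]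

theorem pow_sum_sub_sum_of_castSucc_le (z : R) {s : Fin n → ℕ} {r : Fin (n + 1) → ℕ}
    (h : ∀ i, s i ≤ r i.castSucc) :
    z ^ (∑ i, r i - ∑ i, s i) = (∏ i, z ^ (r i.castSucc - s i)) * z ^ r (Fin.last n) := by
  rw [← pow_sum_sub_sum_of_le z h, ← pow_add, Fin.sum_univ_castSucc,
    tsub_add_eq_add_tsub (sum_le_sum fun i _ ↦ h i)]

theorem prod_mul_last_eq_zero_mul_prod {f g : Fin n → R} {h : Fin (n + 1) → R}
    (hfg : ∀ i, f i * h i.succ = h i.castSucc * g i) :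
    (∏ i, f i) * h (Fin.last n) = h 0 * ∏ i, g i := by
  induction n with
  | zero => simp
  | succ n ih =>
    rw [Fin.prod_univ_succ, Fin.prod_univ_succ, mul_assoc, ← Fin.succ_last,
      ih (h := fun i ↦ h i.succ) fun i ↦ hfg i.succ, ← mul_assoc, hfg 0, mul_assoc,
      Fin.castSucc_zero]

theorem antitone_cons {α : Type*} [Preorder α] {a : Fin n → α} {p : α} (ha : Antitone a)
    (hp : ∀ i, a i ≤ p) : Antitone (Fin.cons p a : Fin (n + 1) → α) := by
  intro i j hij
  cases i using Fin.cases with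
  | zero => cases j using Fin.cases with
    | zero => exact le_rfl
    | succ j => exact hp j
  | succ i => cases j using Fin.cases with
    | zero => exact absurd hij (Fin.succ_pos i).not_ge
    | succ j => exact ha (Fin.succ_le_succ_iff.mp hij)

/-- The contribution of one row of `l` to the sum over all `l` such that `l / a` is a horizontal
and `l / b` a vertical strip: `a` and `b` are the lengths of that row in the two inner shapes, and
`p` is the length of the preceding row of the shape `a`. -/
def outerRowSum (x y : R) (p a b : ℕ) : R :=
  ∑ l ∈ Icc (max a b) (min (b + 1) p), x ^ (l - a) * y ^ (l - b)

/-- The contribution of one row of `m` to the sum over all `m` such that `a / m` is a vertical and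
`b / m` a horizontal strip: `a` and `b` are the lengths of that row in the two outer shapes, and
`c` is the length of the next row of the shape `b`. -/
def innerRowSum (x y : R) (a b c : ℕ) : R :=
  ∑ m ∈ Icc (max (a - 1) c) (min a b), y ^ (a - m) * x ^ (b - m)

/-- The factor exchanged between consecutive rows when `outerRowSum` is turned into `innerRowSum`:
the generating function in `x * y` of the ways to extend a row of length `b` by at most one cell
below a row of length `p`. -/
def gapFactor (x y : R) (p b : ℕ) : R :=
  if b < p then 1 + x * y else if b = p then 1 else 0

theorem outerRowSum_of_le (x y : R) (p : ℕ) {a b : ℕ} (hab : a ≤ b) :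
    outerRowSum x y p a b = x ^ (b - a) * gapFactor x y p b := by
  obtain ⟨d, rfl⟩ := Nat.exists_eq_add_of_le hab
  unfold outerRowSum gapFactor
  split_ifs with hlt heq
  · have range_eq : Icc (max a (a + d)) (min (a + d + 1) p) = {a + d, a + d + 1} := by
      ext; simp only [mem_Icc, mem_insert, mem_singleton]; omega
    have sub_eq : a + d + 1 - a = d + 1 := by omega
    rw [range_eq, sum_pair (by omega), sub_eq]
    simp only [add_tsub_cancel_left, tsub_self]
    ring
  · have range_eq : Icc (max a (a + d)) (min (a + d + 1) p) = {a + d} := by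
      ext; simp only [mem_Icc, mem_singleton]; omega
    rw [range_eq, sum_singleton, tsub_self, pow_zero]
  · rw [Icc_eq_empty (by omega), sum_empty, mul_zero]

theorem innerRowSum_of_le (x y : R) {a b : ℕ} (c : ℕ) (hab : a ≤ b) :
    innerRowSum x y a b c = x ^ (b - a) * gapFactor x y a c := by
  obtain ⟨d, rfl⟩ := Nat.exists_eq_add_of_le hab
  unfold innerRowSum gapFactor
  split_ifs with hlt heq
  · obtain ⟨a, rfl⟩ := Nat.exists_eq_add_one_of_ne_zero (Nat.ne_zero_of_lt hlt)
    have range_eq : Icc (max (a + 1 - 1) c) (min (a + 1) (a + 1 + d)) = {a, a + 1} := by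
      ext; simp only [mem_Icc, mem_insert, mem_singleton]; omega
    have sub_eq : a + 1 + d - a = d + 1 := by omega
    rw [range_eq, sum_pair (by omega), sub_eq]
    simp only [add_tsub_cancel_left, tsub_self]
    ring
  · have range_eq : Icc (max (a - 1) c) (min a (a + d)) = {a} := by
      ext; simp only [mem_Icc, mem_singleton]; omega
    rw [range_eq, sum_singleton, tsub_self, pow_zero, one_mul, mul_one]
  · rw [Icc_eq_empty (by omega), sum_empty, mul_zero]

theorem outerRowSum_succ_self (x y : R) {p b : ℕ} (hp : b + 1 ≤ p) :
    outerRowSum x y p (b + 1) b = y := by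
  simp [outerRowSum, hp]

theorem innerRowSum_succ_self (x y : R) {b c : ℕ} (hc : c ≤ b) :
    innerRowSum x y (b + 1) b c = y := by
  simp [innerRowSum, hc]

theorem outerRowSum_mul_gapFactor (x y : R) {p a b c : ℕ} (hap : a ≤ p) (hcb : c ≤ b) :
    outerRowSum x y p a b * gapFactor x y a c = gapFactor x y p b * innerRowSum x y a b c := by
  rcases le_or_gt a b with hab | hba
  · rw [outerRowSum_of_le x y p hab, innerRowSum_of_le x y c hab]
    ring
  rcases (Nat.succ_le_of_lt hba).eq_or_lt with rfl | hba
  · rw [outerRowSum_succ_self x y hap, innerRowSum_succ_self x y hcb, gapFactor, gapFactor,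
      if_pos (Nat.lt_succ_of_le hcb), if_pos (Nat.lt_of_succ_le hap), mul_comm]
  · rw [outerRowSum, innerRowSum, Icc_eq_empty (by omega), Icc_eq_empty (by omega), sum_empty,
      sum_empty, zero_mul, mul_zero]

theorem filter_interlaces_and_isVerticalStrip_eq_piFinset {a : Fin n → ℕ} {b : Fin (n + 1) → ℕ} :
    {l ∈ boxPartitions (n + 1) k | Interlaces a l ∧ IsVerticalStrip b l} =
      Fintype.piFinset fun i ↦ Icc (max (Fin.snoc (α := fun _ ↦ ℕ) a 0 i) (b i))
        (min (b i + 1) (Fin.cons (α := fun _ ↦ ℕ) k a i)) := by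
  ext l
  have bounds_iff : (l ∈ boxPartitions (n + 1) k ∧ Interlaces a l) ↔
      (∀ i, Fin.snoc (α := fun _ ↦ ℕ) a 0 i ≤ l i) ∧
        ∀ i, l i ≤ Fin.cons (α := fun _ ↦ ℕ) k a i := by
    rw [Fin.forall_fin_succ', Fin.forall_fin_succ]
    simp only [Fin.snoc_castSucc, Fin.snoc_last, Fin.cons_zero, Fin.cons_succ, zero_le, and_true]
    constructor
    · rintro ⟨hl, hal⟩
      exact ⟨fun i ↦ (hal i).2, (mem_boxPartitions.mp hl).1 0, fun i ↦ (hal i).1⟩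
    · rintro ⟨hle, hk, hge⟩
      have hal : Interlaces a l := fun i ↦ ⟨hge i, hle i⟩
      exact ⟨mem_boxPartitions.mpr ⟨fun i ↦ (hal.antitone_right (Fin.zero_le i)).trans hk,
        hal.antitone_right⟩, hal⟩
  rw [mem_filter, ← and_assoc, bounds_iff]
  simp only [IsVerticalStrip, Fintype.mem_piFinset, mem_Icc, max_le_iff, le_min_iff, forall_and]
  tauto

theorem filter_isVerticalStrip_and_interlaces_eq_piFinset {a : Fin n → ℕ} {b : Fin (n + 1) → ℕ}
    (hb : b ∈ boxPartitions (n + 1) k) :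
    {m ∈ boxPartitions n k | IsVerticalStrip m a ∧ Interlaces m b} =
      Fintype.piFinset fun i ↦ Icc (max (a i - 1) (b i.succ)) (min (a i) (b i.castSucc)) := by
  ext m
  rw [mem_filter]
  simp only [Fintype.mem_piFinset, mem_Icc, max_le_iff, le_min_iff, tsub_le_iff_right]
  constructor
  · rintro ⟨-, hma, hmb⟩ i
    exact ⟨⟨(hma i).2, (hmb i).1⟩, (hma i).1, (hmb i).2⟩
  · intro h
    have hmb : Interlaces m b := fun i ↦ ⟨(h i).1.2, (h i).2.2⟩
    exact ⟨hmb.mem_boxPartitions hb, fun i ↦ ⟨(h i).2.1, (h i).1.1⟩, hmb⟩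

theorem sum_interlaces_isVerticalStrip_eq_prod_outerRowSum (x y : R) (a : Fin n → ℕ)
    (b : Fin (n + 1) → ℕ) :
    ∑ l ∈ boxPartitions (n + 1) k with Interlaces a l ∧ IsVerticalStrip b l,
        x ^ (∑ i, l i - ∑ i, a i) * y ^ (∑ i, l i - ∑ i, b i) =
      ∏ i, outerRowSum x y (Fin.cons (α := fun _ ↦ ℕ) k a i) (Fin.snoc (α := fun _ ↦ ℕ) a 0 i)
        (b i) := by
  simp only [outerRowSum]
  rw [prod_univ_sum, ← filter_interlaces_and_isVerticalStrip_eq_piFinset]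
  refine sum_congr rfl fun l hl ↦ ?_
  obtain ⟨-, hal, hbl⟩ := mem_filter.mp hl
  rw [prod_mul_distrib, pow_sum_sub_sum_of_castSucc_le x fun i ↦ (hal i).2,
    pow_sum_sub_sum_of_le y fun i ↦ (hbl i).1, Fin.prod_univ_castSucc (fun i ↦ x ^ (l i - _))]
  simp only [Fin.snoc_castSucc, Fin.snoc_last, tsub_zero]

theorem sum_isVerticalStrip_interlaces_eq_prod_innerRowSum (x y : R) (a : Fin n → ℕ)
    {b : Fin (n + 1) → ℕ} (hb : b ∈ boxPartitions (n + 1) k) :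
    ∑ m ∈ boxPartitions n k with IsVerticalStrip m a ∧ Interlaces m b,
        y ^ (∑ i, a i - ∑ i, m i) * x ^ (∑ i, b i - ∑ i, m i) =
      (∏ i, innerRowSum x y (a i) (b i.castSucc) (b i.succ)) * x ^ b (Fin.last n) := by
  simp only [innerRowSum]
  rw [prod_univ_sum, ← filter_isVerticalStrip_and_interlaces_eq_piFinset hb, sum_mul]
  refine sum_congr rfl fun m hm ↦ ?_
  obtain ⟨-, hma, hmb⟩ := mem_filter.mp hm
  rw [prod_mul_distrib, pow_sum_sub_sum_of_castSucc_le x fun i ↦ (hmb i).2,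
    pow_sum_sub_sum_of_le y fun i ↦ (hma i).1, mul_assoc]

theorem sum_interlaces_isVerticalStrip_eq_mul_sum (x y : R) {a : Fin n → ℕ} {b : Fin (n + 1) → ℕ}
    (ha : a ∈ boxPartitions n (k + 1)) (hb : b ∈ boxPartitions (n + 1) k) :
    ∑ l ∈ boxPartitions (n + 1) (k + 1) with Interlaces a l ∧ IsVerticalStrip b l,
        x ^ (∑ i, l i - ∑ i, a i) * y ^ (∑ i, l i - ∑ i, b i) =
      (1 + x * y) * ∑ m ∈ boxPartitions n k with IsVerticalStrip m a ∧ Interlaces m b,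
        y ^ (∑ i, a i - ∑ i, m i) * x ^ (∑ i, b i - ∑ i, m i) := by
  obtain ⟨hak, ha⟩ := mem_boxPartitions.mp ha
  obtain ⟨hbk, hb_anti⟩ := mem_boxPartitions.mp hb
  let p : Fin (n + 1) → ℕ := Fin.cons (k + 1) a
  have p_antitone : Antitone p := antitone_cons ha hak
  have rows_exchange : (∏ i : Fin n, outerRowSum x y (p i.castSucc) (a i) (b i.castSucc)) *
      gapFactor x y (p (Fin.last n)) (b (Fin.last n)) =
      gapFactor x y (p 0) (b 0) * ∏ i : Fin n, innerRowSum x y (a i) (b i.castSucc) (b i.succ) :=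
    prod_mul_last_eq_zero_mul_prod (h := fun i ↦ gapFactor x y (p i) (b i)) fun i ↦
      outerRowSum_mul_gapFactor x y (Fin.antitone_iff_succ_le.mp p_antitone i)
        (Fin.antitone_iff_succ_le.mp hb_anti i)
  have gapFactor_zero : gapFactor x y (p 0) (b 0) = 1 + x * y :=
    if_pos (Nat.lt_succ_of_le (hbk 0))
  rw [sum_interlaces_isVerticalStrip_eq_prod_outerRowSum,
    sum_isVerticalStrip_interlaces_eq_prod_innerRowSum x y a hb, Fin.prod_univ_castSucc,
    Fin.snoc_last, outerRowSum_of_le x y _ (Nat.zero_le _), tsub_zero]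
  simp only [Fin.snoc_castSucc]
  rw [mul_left_comm, rows_exchange, gapFactor_zero]
  ring

theorem sum_interlaces_sum_isVerticalStrip_comm (x y : R) {a : Fin n → ℕ}
    (ha : a ∈ boxPartitions n (k + 1)) (f : (Fin (n + 1) → ℕ) → R) :
    ∑ l ∈ boxPartitions (n + 1) (k + 1) with Interlaces a l, x ^ (∑ i, l i - ∑ i, a i) *
        ∑ b ∈ boxPartitions (n + 1) k with IsVerticalStrip b l, y ^ (∑ i, l i - ∑ i, b i) * f b =
      (1 + x * y) * ∑ m ∈ boxPartitions n k with IsVerticalStrip m a, y ^ (∑ i, a i - ∑ i, m i) *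
        ∑ b ∈ boxPartitions (n + 1) k with Interlaces m b, x ^ (∑ i, b i - ∑ i, m i) * f b := by
  calc
    _ = ∑ b ∈ boxPartitions (n + 1) k, (∑ l ∈ boxPartitions (n + 1) (k + 1) with
          Interlaces a l ∧ IsVerticalStrip b l,
            x ^ (∑ i, l i - ∑ i, a i) * y ^ (∑ i, l i - ∑ i, b i)) * f b := by
        simp only [mul_sum, sum_mul, mul_assoc]
        exact sum_comm' (by simp only [mem_filter]; tauto)
    _ = ∑ b ∈ boxPartitions (n + 1) k, ((1 + x * y) * ∑ m ∈ boxPartitions n k with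
          IsVerticalStrip m a ∧ Interlaces m b,
            y ^ (∑ i, a i - ∑ i, m i) * x ^ (∑ i, b i - ∑ i, m i)) * f b :=
        sum_congr rfl fun b hb ↦ by rw [sum_interlaces_isVerticalStrip_eq_mul_sum x y ha hb]
    _ = _ := by
        simp only [mul_sum, sum_mul, mul_assoc]
        exact sum_comm' (by simp only [mem_filter]; tauto)

end Exchange

section Branching

variable {N : ℕ}

/-- The shape of the part of the tableau `T` whose entries differ from the largest letter. The last
row is dropped because column strictness forces all its entries to be the largest letter. -/
def truncatedShape {r : Fin (N + 1) → ℕ} (T : ∀ i, Fin (r i) → Fin (N + 1)) : Fin N → ℕ :=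
  fun i ↦ #{j | T i.castSucc j < Fin.last N}

/-- The filling of the shape `r` which agrees with `T` on the shape `s` and has the largest letter
everywhere else. -/
def fillLast {s : Fin N → ℕ} (r : Fin (N + 1) → ℕ) (T : ∀ i, Fin (s i) → Fin N) :
    ∀ i, Fin (r i) → Fin (N + 1) :=
  Fin.lastCases (fun _ ↦ Fin.last N) fun i j ↦
    if h : (j : ℕ) < s i then (T i ⟨j, h⟩).castSucc else Fin.last N

theorem mem_ssytFinset {m : ℕ} {r : Fin m → ℕ} {T : ∀ i, Fin (r i) → Fin N} :
    T ∈ ssytFinset N r ↔ IsSsyt r T := by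
  simp only [ssytFinset, mem_filter, mem_univ, true_and]

theorem row_le_entry {m : ℕ} {r : Fin m → ℕ} (hr : Antitone r) {T : ∀ i, Fin (r i) → Fin N}
    (hT : IsSsyt r T) (i : Fin m) (j : Fin (r i)) : (i : ℕ) ≤ T i j := by
  obtain ⟨i, hi⟩ := i
  induction i with
  | zero => exact Nat.zero_le _
  | succ i ih =>
    let above : Fin m := ⟨i, Nat.lt_of_succ_lt hi⟩
    have above_lt : above < ⟨i + 1, hi⟩ := Nat.lt_succ_self i
    let j' : Fin (r above) := ⟨j, j.2.trans_le (hr above_lt.le)⟩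
    exact (ih _ j').trans_lt (hT.2 above _ j' j above_lt rfl)

theorem lt_truncatedShape_iff {r : Fin (N + 1) → ℕ} {T : ∀ i, Fin (r i) → Fin (N + 1)}
    (hT : IsSsyt r T) (i : Fin N) (j : Fin (r i.castSucc)) :
    (j : ℕ) < truncatedShape T i ↔ T i.castSucc j < Fin.last N :=
  Tuple.lt_card_lt_iff_apply_lt_of_monotone fun j j' ↦ hT.1 i.castSucc j j'

theorem truncatedShape_interlaces {r : Fin (N + 1) → ℕ} (hr : Antitone r)
    {T : ∀ i, Fin (r i) → Fin (N + 1)} (hT : IsSsyt r T) : Interlaces (truncatedShape T) r := by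
  refine fun i ↦ ⟨le_of_forall_lt fun j hj ↦ ?_, card_finset_fin_le _⟩
  have hj' : j < r i.castSucc := hj.trans_le (Fin.antitone_iff_succ_le.mp hr i)
  have entry_lt := hT.2 i.castSucc i.succ ⟨j, hj'⟩ ⟨j, hj⟩ i.castSucc_lt_succ rfl
  exact (lt_truncatedShape_iff hT i ⟨j, hj'⟩).mpr (entry_lt.trans_le (Fin.le_last _))

section FillLast

variable {s : Fin N → ℕ} {r : Fin (N + 1) → ℕ}

theorem fillLast_last (T : ∀ i, Fin (s i) → Fin N) (j : Fin (r (Fin.last N))) :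
    fillLast r T (Fin.last N) j = Fin.last N := by
  simp only [fillLast, Fin.lastCases_last]

theorem fillLast_castSucc (T : ∀ i, Fin (s i) → Fin N) (i : Fin N) (j : Fin (r i.castSucc)) :
    fillLast r T i.castSucc j =
      if h : (j : ℕ) < s i then (T i ⟨j, h⟩).castSucc else Fin.last N := by
  simp only [fillLast, Fin.lastCases_castSucc]

theorem isSsyt_fillLast (hsr : Interlaces s r) {T : ∀ i, Fin (s i) → Fin N} (hT : IsSsyt s T) :
    IsSsyt r (fillLast r T) := by
  constructor
  · intro i j j' hjj'
    cases i using Fin.lastCases with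
    | last => simp only [fillLast_last, le_refl]
    | cast i =>
      rw [fillLast_castSucc, fillLast_castSucc]
      split_ifs with hj hj'
      · exact Fin.castSucc_le_castSucc_iff.mpr (hT.1 i _ _ hjj')
      · exact Fin.le_last _
      · omega
      · exact le_rfl
  · intro i i' j j' hii' hjj'
    cases i using Fin.lastCases with
    | last => exact absurd (Fin.le_last i') hii'.not_ge
    | cast i =>
      have hj : (j : ℕ) < s i := calc
        (j : ℕ) = j' := hjj'
        _ < r i' := j'.2
        _ ≤ r i.succ := hsr.antitone_right (Fin.castSucc_lt_iff_succ_le.mp hii')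
        _ ≤ s i := (hsr i).1
      rw [fillLast_castSucc, dif_pos hj]
      cases i' using Fin.lastCases with
      | last => rw [fillLast_last]; exact Fin.castSucc_lt_last _
      | cast i' =>
        rw [fillLast_castSucc]
        split_ifs with hj'
        · exact Fin.castSucc_lt_castSucc_iff.mpr
            (hT.2 i i' _ _ (Fin.castSucc_lt_castSucc_iff.mp hii') hjj')
        · exact Fin.castSucc_lt_last _

theorem truncatedShape_fillLast (hsr : ∀ i, s i ≤ r i.castSucc) (T : ∀ i, Fin (s i) → Fin N) :
    truncatedShape (fillLast r T) = s := by
  ext i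
  have lt_last_iff (j : Fin (r i.castSucc)) :
      fillLast r T i.castSucc j < Fin.last N ↔ (j : ℕ) < s i := by
    rw [fillLast_castSucc]
    split_ifs with hj <;> simp [hj, Fin.castSucc_lt_last]
  simp only [truncatedShape, lt_last_iff]
  rw [Fin.card_filter_val_lt, min_eq_right (hsr i)]

theorem fillLast_injective (hsr : ∀ i, s i ≤ r i.castSucc) :
    Function.Injective (fillLast r : (∀ i, Fin (s i) → Fin N) → _) := by
  intro T T' h
  ext i j : 2
  have entry_eq := congrFun (congrFun h i.castSucc) ⟨j, j.2.trans_le (hsr i)⟩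
  simpa only [fillLast_castSucc, j.2, dif_pos, Fin.castSucc_inj] using entry_eq

theorem exists_fillLast_eq {T : ∀ i, Fin (r i) → Fin (N + 1)} (hr : Antitone r)
    (hT : IsSsyt r T) (hTs : truncatedShape T = s) :
    ∃ T' : ∀ i, Fin (s i) → Fin N, IsSsyt s T' ∧ fillLast r T' = T := by
  subst hTs
  have hsr := truncatedShape_interlaces hr hT
  have entry_ne_last (i : Fin N) (j : Fin (truncatedShape T i)) :
      T i.castSucc ⟨j, j.2.trans_le (hsr i).2⟩ ≠ Fin.last N :=
    ((lt_truncatedShape_iff hT i ⟨j, _⟩).mp j.2).ne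
  refine ⟨fun i j ↦ (T i.castSucc ⟨j, _⟩).castPred (entry_ne_last i j), ⟨?_, ?_⟩, ?_⟩
  · exact fun i _ _ hjj' ↦ Fin.castPred_le_castPred_iff.mpr (hT.1 i.castSucc _ _ hjj')
  · exact fun i i' _ _ hii' hjj' ↦ Fin.castPred_lt_castPred_iff.mpr
      (hT.2 i.castSucc i'.castSucc _ _ (Fin.castSucc_lt_castSucc_iff.mpr hii') hjj')
  · ext i j : 2
    cases i using Fin.lastCases with
    | last =>
      rw [fillLast_last]
      exact (Fin.last_le_iff.mp (row_le_entry hr hT (Fin.last N) j)).symm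
    | cast i =>
      rw [fillLast_castSucc]
      split_ifs with hj
      · exact Fin.castSucc_castPred _ _
      · exact (Fin.last_le_iff.mp (not_lt.mp (mt (lt_truncatedShape_iff hT i j).mpr hj))).symm

variable {R : Type*} [CommRing R]

theorem prod_fillLast_castSucc {i : Fin N} (hsr : s i ≤ r i.castSucc)
    (T : ∀ i, Fin (s i) → Fin N) (x : Fin (N + 1) → R) :
    ∏ j, x (fillLast r T i.castSucc j) =
      (∏ j, x (T i j).castSucc) * x (Fin.last N) ^ (r i.castSucc - s i) := by
  have length_eq : r i.castSucc = s i + (r i.castSucc - s i) :=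
    (Nat.add_sub_of_le hsr).symm
  rw [← (finCongr length_eq).symm.prod_comp, Fin.prod_univ_add]
  simp [fillLast_castSucc]

theorem prod_fillLast (hsr : ∀ i, s i ≤ r i.castSucc) (T : ∀ i, Fin (s i) → Fin N)
    (x : Fin (N + 1) → R) :
    ∏ i, ∏ j, x (fillLast r T i j) =
      x (Fin.last N) ^ (∑ i, r i - ∑ i, s i) * ∏ i, ∏ j, x (T i j).castSucc := by
  rw [pow_sum_sub_sum_of_castSucc_le _ hsr, Fin.prod_univ_castSucc]
  simp only [prod_fillLast_castSucc (hsr _), fillLast_last, prod_mul_distrib, prod_const, card_univ,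
    Fintype.card_fin]
  ring

end FillLast

variable {R : Type*} [CommRing R] {n k : ℕ}

theorem schurPoly_zero {m : ℕ} (x : Fin N → R) : schurPoly N (0 : Fin m → ℕ) x = 1 := by
  have all_ssyt : ssytFinset N (0 : Fin m → ℕ) = univ :=
    filter_true_of_mem fun _ _ ↦ ⟨fun _ j ↦ j.elim0, fun _ _ j ↦ j.elim0⟩
  rw [schurPoly, all_ssyt]
  simp

theorem schurPoly_succ {r : Fin (N + 1) → ℕ} (hr : r ∈ boxPartitions (N + 1) k)
    (x : Fin (N + 1) → R) :
    schurPoly (N + 1) r x = ∑ s ∈ boxPartitions N k with Interlaces s r,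
      x (Fin.last N) ^ (∑ i, r i - ∑ i, s i) * schurPoly N s fun i ↦ x i.castSucc := by
  have hr' := (mem_boxPartitions.mp hr).2
  have shape_mem : ∀ T ∈ ssytFinset (N + 1) r,
      truncatedShape T ∈ ({s ∈ boxPartitions N k | Interlaces s r} : Finset _) := fun T hT ↦
    have hsr := truncatedShape_interlaces hr' (mem_ssytFinset.mp hT)
    mem_filter.mpr ⟨hsr.mem_boxPartitions hr, hsr⟩
  rw [schurPoly, ← sum_fiberwise_of_maps_to shape_mem]
  refine sum_congr rfl fun s hs ↦ ?_
  have hsr : Interlaces s r := (mem_filter.mp hs).2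
  have hle (i : Fin N) : s i ≤ r i.castSucc := (hsr i).2
  rw [schurPoly, mul_sum]
  symm
  refine sum_nbij (fillLast r) ?_ (fillLast_injective hle).injOn ?_ ?_
  · exact fun T hT ↦ mem_filter.mpr ⟨mem_ssytFinset.mpr
      (isSsyt_fillLast hsr (mem_ssytFinset.mp hT)), truncatedShape_fillLast hle T⟩
  · intro T hT
    obtain ⟨hT, hTs⟩ := mem_filter.mp hT
    obtain ⟨T', hT', rfl⟩ := exists_fillLast_eq hr' (mem_ssytFinset.mp hT) hTs
    exact ⟨T', mem_ssytFinset.mpr hT', rfl⟩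
  · exact fun T _ ↦ (prod_fillLast hle T x).symm

theorem schurPoly_succ_conjugate {l : Fin n → ℕ} (hl : l ∈ boxPartitions n (k + 1))
    (y : Fin (k + 1) → R) :
    schurPoly (k + 1) (conjugate (k + 1) l) y =
      ∑ m ∈ boxPartitions n k with IsVerticalStrip m l,
        y (Fin.last k) ^ (∑ i, l i - ∑ i, m i) *
          schurPoly k (conjugate k m) fun j ↦ y j.castSucc := by
  rw [schurPoly_succ (conjugate_mem_boxPartitions l), sum_filter, sum_filter,
    ← sum_boxPartitions_conjugate]
  refine sum_congr rfl fun m hm ↦ ?_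
  rw [sum_conjugate (mem_boxPartitions.mp hl).1, sum_conjugate (mem_boxPartitions.mp hm).1]
  exact if_congr (interlaces_conjugate_iff hl hm) rfl rfl

end Branching

section DualCauchyIdentity

variable {R : Type*} [CommRing R] {n k : ℕ}

theorem sum_interlaces_mul_schurPoly_conjugate (x : R) (y : Fin k → R) {a : Fin n → ℕ}
    (ha : a ∈ boxPartitions n k) :
    ∑ l ∈ boxPartitions (n + 1) k with Interlaces a l,
        x ^ (∑ i, l i - ∑ i, a i) * schurPoly k (conjugate k l) y =
      schurPoly k (conjugate k a) y * ∏ j, (1 + x * y j) := by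
  induction k generalizing n with
  | zero =>
    rw [boxPartitions_zero_right, mem_singleton] at ha
    subst ha
    have zero_interlaces : Interlaces (0 : Fin n → ℕ) 0 := fun _ ↦ ⟨le_rfl, le_rfl⟩
    rw [boxPartitions_zero_right, filter_singleton, if_pos zero_interlaces, sum_singleton]
    simp [conjugate_zero]
  | succ k ih =>
    let y' : Fin k → R := fun j ↦ y j.castSucc
    let z := y (Fin.last k)
    calc
      _ = ∑ l ∈ boxPartitions (n + 1) (k + 1) with Interlaces a l, x ^ (∑ i, l i - ∑ i, a i) *
            ∑ b ∈ boxPartitions (n + 1) k with IsVerticalStrip b l,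
              z ^ (∑ i, l i - ∑ i, b i) * schurPoly k (conjugate k b) y' :=
          sum_congr rfl fun l hl ↦ by rw [schurPoly_succ_conjugate (mem_filter.mp hl).1]
      _ = (1 + x * z) * ∑ m ∈ boxPartitions n k with IsVerticalStrip m a,
            z ^ (∑ i, a i - ∑ i, m i) * ∑ b ∈ boxPartitions (n + 1) k with Interlaces m b,
              x ^ (∑ i, b i - ∑ i, m i) * schurPoly k (conjugate k b) y' :=
          sum_interlaces_sum_isVerticalStrip_comm x z ha _
      _ = (1 + x * z) * ∑ m ∈ boxPartitions n k with IsVerticalStrip m a,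
            z ^ (∑ i, a i - ∑ i, m i) *
              (schurPoly k (conjugate k m) y' * ∏ j, (1 + x * y' j)) := by
          congr 1
          exact sum_congr rfl fun m hm ↦ by rw [ih y' (mem_filter.mp hm).1]
      _ = _ := by
          simp only [← mul_assoc, ← sum_mul]
          rw [schurPoly_succ_conjugate ha, Fin.prod_univ_castSucc]
          ring

theorem sum_schurPoly_mul_schurPoly_conjugate (x : Fin n → R) (y : Fin k → R) :
    ∑ l ∈ boxPartitions n k, schurPoly n l x * schurPoly k (conjugate k l) y =
      ∏ i, ∏ j, (1 + x i * y j) := by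
  induction n with
  | zero =>
    rw [boxPartitions_zero_left, sum_singleton, conjugate_zero, schurPoly_zero, schurPoly_zero,
      one_mul, univ_eq_empty, prod_empty]
  | succ n ih =>
    let x' : Fin n → R := fun i ↦ x i.castSucc
    let z := x (Fin.last n)
    calc
      _ = ∑ a ∈ boxPartitions n k, schurPoly n a x' *
            ∑ l ∈ boxPartitions (n + 1) k with Interlaces a l,
              z ^ (∑ i, l i - ∑ i, a i) * schurPoly k (conjugate k l) y := by
          rw [sum_congr rfl fun l hl ↦ by rw [schurPoly_succ hl]]
          simp only [mul_sum, sum_mul, mul_left_comm (schurPoly n _ _), ← mul_assoc]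
          exact sum_comm' (by simp only [mem_filter]; tauto)
      _ = ∑ a ∈ boxPartitions n k, schurPoly n a x' * schurPoly k (conjugate k a) y *
            ∏ j, (1 + z * y j) :=
          sum_congr rfl fun a ha ↦ by
            rw [sum_interlaces_mul_schurPoly_conjugate z y ha, mul_assoc]
      _ = _ := by rw [← sum_mul, ih x', Fin.prod_univ_castSucc]

theorem sum_filter_fin_eq_sum_boxPartitions {M : Type*} [AddCommMonoid M] (f : (Fin n → ℕ) → M) :
    ∑ l : Fin n → Fin (k + 1) with ∀ i j, i ≤ j → l j ≤ l i, f (fun i ↦ l i) =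
      ∑ l ∈ boxPartitions n k, f l := by
  refine sum_nbij (fun l i ↦ (l i : ℕ)) ?_ ?_ ?_ fun _ _ ↦ rfl
  · exact fun l hl ↦ mem_boxPartitions.mpr ⟨fun i ↦ (l i).is_le, (mem_filter.mp hl).2⟩
  · exact fun l _ l' _ h ↦ funext fun i ↦ Fin.ext (congrFun h i)
  · intro l hl
    obtain ⟨hlk, hl⟩ := mem_boxPartitions.mp hl
    exact ⟨fun i ↦ ⟨l i, Nat.lt_succ_of_le (hlk i)⟩,
      mem_filter.mpr ⟨mem_univ _, fun _ _ hij ↦ hl hij⟩, rfl⟩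

end DualCauchyIdentity

end DualCauchy

/-- Dual Cauchy identity: summing over partitions `λ` inside an `n × k` rectangle,
`Σ_λ s_λ(x) s_{λ'}(y) = ∏_{i,j} (1 + x_i y_j)`, where `λ'` is the conjugate. -/
theorem stmt6 {R : Type*} [CommRing R] (n k : ℕ) (x : Fin n → R) (y : Fin k → R) :
    ∑ l ∈ (Finset.univ.filter
        (fun l : Fin n → Fin (k + 1) => ∀ i j : Fin n, i ≤ j → l j ≤ l i)),
      schurPoly n (fun i => (l i : ℕ)) x
        * schurPoly k (fun j : Fin k =>
            (Finset.univ.filter (fun i : Fin n => (j : ℕ) < (l i : ℕ))).card) y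
      = ∏ i : Fin n, ∏ j : Fin k, (1 + x i * y j) := by
  rw [← DualCauchy.sum_schurPoly_mul_schurPoly_conjugate x y]
  exact DualCauchy.sum_filter_fin_eq_sum_boxPartitions
    fun l ↦ schurPoly n l x * schurPoly k (DualCauchy.conjugate k l) y

end
end

section
/- For a partition λ contained in an n×k rectangle with complement λ̄ (λ̄_i = k - λ_{n+1-i}), the following Schur polynomial identity holds: Σ_{λ ⊆ k^n} s_λ(x_1,...,x_n) · s_{λ̄'}(y_1,...,y_k) = ∏_{i=1}^{n} ∏_{j=1}^{k} (x_i + y_j), where λ̄' is the conjugate of the complement of λ in the n×k rectangle. -/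
open Finset

noncomputable section
open scoped Classical

/-!
The proof is by induction on `n`. Removing the entries `n` from a tableau removes a horizontal strip
from its shape, which gives the branching rule
`s_λ(x_1, …, x_n) = ∑ s_μ(x_1, …, x_{n-1}) x_n ^ (|λ| - |μ|)` over all `μ` interlacing with `λ`.
Passing to conjugate complements turns these `μ ⊆ λ` into vertical strips, so the induction step
becomes the dual Pieri rule
`s_ν(y) ∏ (u + y_j) = ∑ s_λ(y) u ^ (k - |λ / ν|)` over all vertical strips `λ / ν`.
The Pieri rule is itself proved by induction on `k`, through branching: the weighted
operators removing a horizontal strip and adding a vertical strip commute up to the factor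
`u + y_k`, and this exchange relation splits into independent choices, one for each row.
-/

/-! ### Strips and interlacing shapes -/

/-- The shapes `κ` interlacing with `r`, that is `r (i + 1) ≤ κ i ≤ r i`. For a partition `r` with
`k + 1` parts they are the partitions with `k` parts for which `r / κ` is a horizontal strip. -/
def interlacing {k : ℕ} (r : Fin (k + 1) → ℕ) : Finset (Fin k → ℕ) :=
  Fintype.piFinset fun i => Icc (r i.succ) (r i.castSucc)

/-- The partitions `l` with `k` parts such that `l / r` is a vertical strip: each row of `r`
grows by at most one box. -/
def verticalStrips {k : ℕ} (r : Fin k → ℕ) : Finset (Fin k → ℕ) :=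
  (Fintype.piFinset fun i => Icc (r i) (r i + 1)).filter Antitone

/-- The partitions contained in the `n × k` rectangle, padded with zeros to `n` parts. -/
def boxPartitions (n k : ℕ) : Finset (Fin n → ℕ) :=
  (Fintype.piFinset fun _ => range (k + 1)).filter Antitone

section Strips

variable {n k : ℕ}

lemma mem_interlacing {r : Fin (k + 1) → ℕ} {κ : Fin k → ℕ} :
    κ ∈ interlacing r ↔ ∀ i, r i.succ ≤ κ i ∧ κ i ≤ r i.castSucc := by
  simp only [interlacing, Fintype.mem_piFinset, mem_Icc]

lemma mem_verticalStrips {r l : Fin k → ℕ} :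
    l ∈ verticalStrips r ↔ (∀ i, r i ≤ l i ∧ l i ≤ r i + 1) ∧ Antitone l := by
  simp only [verticalStrips, mem_filter, Fintype.mem_piFinset, mem_Icc]

lemma mem_boxPartitions {l : Fin n → ℕ} :
    l ∈ boxPartitions n k ↔ (∀ i, l i ≤ k) ∧ Antitone l := by
  simp only [boxPartitions, mem_filter, Fintype.mem_piFinset, mem_range, Nat.lt_succ_iff]

lemma antitone_left_of_mem_interlacing {r : Fin (k + 1) → ℕ} {κ : Fin k → ℕ}
    (h : κ ∈ interlacing r) : Antitone κ := by
  rw [mem_interlacing] at h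
  cases k with
  | zero => exact fun i => i.elim0
  | succ k =>
    refine Fin.antitone_iff_succ_le.2 fun i => ?_
    have upper : κ i.succ ≤ r i.succ.castSucc := (h i.succ).2
    have lower : r i.castSucc.succ ≤ κ i.castSucc := (h i.castSucc).1
    rw [← Fin.succ_castSucc] at upper
    exact upper.trans lower

lemma antitone_right_of_mem_interlacing {r : Fin (k + 1) → ℕ} {κ : Fin k → ℕ}
    (h : κ ∈ interlacing r) : Antitone r :=
  Fin.antitone_iff_succ_le.2 fun i =>
    (mem_interlacing.1 h i).1.trans (mem_interlacing.1 h i).2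

lemma mem_boxPartitions_of_mem_interlacing {l : Fin (n + 1) → ℕ} {μ : Fin n → ℕ}
    (hl : l ∈ boxPartitions (n + 1) k) (hμ : μ ∈ interlacing l) : μ ∈ boxPartitions n k :=
  mem_boxPartitions.2 ⟨fun i => (mem_interlacing.1 hμ i).2.trans ((mem_boxPartitions.1 hl).1 _),
    antitone_left_of_mem_interlacing hμ⟩

lemma mem_boxPartitions_of_mem_verticalStrips {l r : Fin n → ℕ}
    (hr : r ∈ boxPartitions n k) (hl : l ∈ verticalStrips r) : l ∈ boxPartitions n (k + 1) :=
  mem_boxPartitions.2 ⟨fun i => ((mem_verticalStrips.1 hl).1 i).2.trans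
    (Nat.succ_le_succ ((mem_boxPartitions.1 hr).1 i)), (mem_verticalStrips.1 hl).2⟩

lemma boxPartitions_zero_left : boxPartitions 0 k = {fun _ => 0} := by
  ext l
  simp only [mem_boxPartitions, mem_singleton, IsEmpty.forall_iff, true_and,
    Subsingleton.elim l fun _ => 0, antitone_const]

lemma sum_filter_fin_eq_sum_boxPartitions {M : Type*} [AddCommMonoid M] (f : (Fin n → ℕ) → M) :
    ∑ l ∈ univ.filter (fun l : Fin n → Fin (k + 1) => ∀ i j : Fin n, i ≤ j → l j ≤ l i),
      f (fun i => (l i : ℕ)) = ∑ l ∈ boxPartitions n k, f l := by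
  refine sum_bij (fun l _ i => (l i : ℕ)) (fun l hl => ?_) (fun l _ l' _ h => ?_)
    (fun l hl => ?_) fun _ _ => rfl
  · exact mem_boxPartitions.2 ⟨fun i => (l i).is_le, fun i j => (mem_filter.1 hl).2 i j⟩
  · exact funext fun i => Fin.ext (congrFun h i)
  · obtain ⟨hlk, hl⟩ := mem_boxPartitions.1 hl
    exact ⟨fun i => ⟨l i, Nat.lt_succ_iff.2 (hlk i)⟩,
      mem_filter.2 ⟨mem_univ _, fun i j hij => hl hij⟩, rfl⟩

variable {R : Type*} [CommSemiring R]

lemma pow_sum_sub_sum_of_mem_interlacing (y : R) {r : Fin (k + 1) → ℕ} {κ : Fin k → ℕ}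
    (h : κ ∈ interlacing r) :
    y ^ (∑ i, r i - ∑ i, κ i) = y ^ r (Fin.last k) * ∏ i : Fin k, y ^ (r i.castSucc - κ i) := by
  have le : ∀ i, κ i ≤ r i.castSucc := fun i => (mem_interlacing.1 h i).2
  rw [prod_pow_eq_pow_sum, ← pow_add, sum_tsub_distrib _ fun i _ => le i, Fin.sum_univ_castSucc,
    add_comm, Nat.add_sub_assoc (sum_le_sum fun i _ => le i)]

lemma pow_sum_add_sub_sum_of_mem_verticalStrips (u : R) {r l : Fin k → ℕ}
    (h : l ∈ verticalStrips r) :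
    u ^ (∑ i, r i + k - ∑ i, l i) = ∏ i, u ^ (r i + 1 - l i) := by
  rw [prod_pow_eq_pow_sum, sum_tsub_distrib _ fun i _ => ((mem_verticalStrips.1 h).1 i).2]
  simp only [sum_add_distrib, sum_const, card_univ, Fintype.card_fin, smul_eq_mul, mul_one]

end Strips

/-! ### The branching rule -/

/-- The row lengths left over when all entries equal to the largest letter are deleted from `T`;
the last row, which in a semistandard tableau consists of that letter only, is dropped. -/
def shapeBelowLast {k N : ℕ} {r : Fin (k + 1) → ℕ}
    (T : ∀ i : Fin (k + 1), Fin (r i) → Fin (N + 1)) (i : Fin k) : ℕ :=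
  (univ.filter fun j : Fin (r i.castSucc) => T i.castSucc j < Fin.last N).card

/-- The filling of the shape `r` that agrees with the tableau `U` on the smaller shape `κ` and is
the new largest letter everywhere else. -/
def extendByLast {k N : ℕ} (r : Fin (k + 1) → ℕ) {κ : Fin k → ℕ}
    (U : ∀ i : Fin k, Fin (κ i) → Fin N) : ∀ i : Fin (k + 1), Fin (r i) → Fin (N + 1) :=
  Fin.lastCases (fun _ => Fin.last N) fun i j =>
    if h : (j : ℕ) < κ i then (U i ⟨j, h⟩).castSucc else Fin.last N

section Branching

variable {m k N : ℕ}

lemma mem_ssytFinset {r : Fin m → ℕ} {T : ∀ i : Fin m, Fin (r i) → Fin N} :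
    T ∈ ssytFinset N r ↔ IsSsyt r T := by
  simp only [ssytFinset, mem_filter, mem_univ, true_and]

lemma IsSsyt.row_le_entry {r : Fin m → ℕ} (hr : Antitone r)
    {T : ∀ i : Fin m, Fin (r i) → Fin N} (hT : IsSsyt r T) (i : Fin m) (j : Fin (r i)) :
    (i : ℕ) ≤ T i j := by
  obtain ⟨a, ha⟩ := i
  induction a with
  | zero => exact Nat.zero_le _
  | succ a ih =>
    have hle : r ⟨a + 1, ha⟩ ≤ r ⟨a, by omega⟩ := hr (Fin.mk_le_mk.2 a.le_succ)
    have entry_lt := hT.2 ⟨a, by omega⟩ ⟨a + 1, ha⟩ (j.castLE hle) j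
      (Fin.mk_lt_mk.2 a.lt_succ_self) rfl
    exact (ih (by omega) (j.castLE hle)).trans_lt entry_lt

lemma IsSsyt.lt_last_iff {r : Fin (k + 1) → ℕ} {T : ∀ i : Fin (k + 1), Fin (r i) → Fin (N + 1)}
    (hT : IsSsyt r T) (i : Fin k) (j : Fin (r i.castSucc)) :
    T i.castSucc j < Fin.last N ↔ (j : ℕ) < shapeBelowLast T i :=
  (Fin.lt_card_filter_univ_iff_apply_of_imp (fun j => T i.castSucc j < Fin.last N)
    fun a b hba ha => (hT.1 _ b a hba).trans_lt ha).symm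

lemma IsSsyt.shapeBelowLast_mem_interlacing {r : Fin (k + 1) → ℕ} (hr : Antitone r)
    {T : ∀ i : Fin (k + 1), Fin (r i) → Fin (N + 1)} (hT : IsSsyt r T) :
    shapeBelowLast T ∈ interlacing r := by
  refine mem_interlacing.2 fun i => ⟨?_, (card_le_univ _).trans (Fintype.card_fin _).le⟩
  by_contra! hlt
  have hle : r i.succ ≤ r i.castSucc := hr i.castSucc_le_succ
  have entry_lt := hT.2 i.castSucc i.succ ⟨shapeBelowLast T i, hlt.trans_le hle⟩
    ⟨shapeBelowLast T i, hlt⟩ Fin.castSucc_lt_succ rfl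
  exact lt_irrefl _ ((hT.lt_last_iff i _).1 (entry_lt.trans_le (Fin.le_last _)))

variable {r : Fin (k + 1) → ℕ} {κ : Fin k → ℕ}

lemma extendByLast_castSucc (U : ∀ i : Fin k, Fin (κ i) → Fin N) (i : Fin k)
    (j : Fin (r i.castSucc)) :
    extendByLast r U i.castSucc j =
      if h : (j : ℕ) < κ i then (U i ⟨j, h⟩).castSucc else Fin.last N := by
  simp only [extendByLast, Fin.lastCases_castSucc]

lemma extendByLast_last (U : ∀ i : Fin k, Fin (κ i) → Fin N) (j : Fin (r (Fin.last k))) :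
    extendByLast r U (Fin.last k) j = Fin.last N := by
  simp only [extendByLast, Fin.lastCases_last]

lemma extendByLast_injective (hκ : ∀ i, κ i ≤ r i.castSucc) :
    Function.Injective (extendByLast r : (∀ i : Fin k, Fin (κ i) → Fin N) → _) := by
  intro U V h
  funext i j
  have entry_eq := congrFun (congrFun h i.castSucc) (j.castLE (hκ i))
  simpa [extendByLast_castSucc] using entry_eq

lemma shapeBelowLast_extendByLast (hκ : ∀ i, κ i ≤ r i.castSucc)
    (U : ∀ i : Fin k, Fin (κ i) → Fin N) : shapeBelowLast (extendByLast r U) = κ := by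
  funext i
  have lt_last_iff : ∀ j : Fin (r i.castSucc),
      extendByLast r U i.castSucc j < Fin.last N ↔ (j : ℕ) < κ i := by
    intro j
    rw [extendByLast_castSucc]
    split_ifs with h <;> simp [h, Fin.castSucc_lt_last]
  simp only [shapeBelowLast, lt_last_iff, Fin.card_filter_val_lt, min_eq_right (hκ i)]

lemma isSsyt_extendByLast (hκ : κ ∈ interlacing r) {U : ∀ i : Fin k, Fin (κ i) → Fin N}
    (hU : IsSsyt κ U) : IsSsyt r (extendByLast r U) := by
  constructor
  · intro i j j' hj
    induction i using Fin.lastCases with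
    | last => rw [extendByLast_last, extendByLast_last]
    | cast i =>
      rw [extendByLast_castSucc, extendByLast_castSucc]
      split_ifs with h h' h'
      · exact Fin.castSucc_le_castSucc_iff.2 (hU.1 i _ _ hj)
      · exact Fin.le_last _
      · exact absurd (hj.trans_lt h') h
      · exact le_rfl
  · intro i i' j j' hi hj
    induction i using Fin.lastCases with
    | last => exact absurd hi (Fin.le_last _).not_gt
    | cast i =>
      have hlt : (j : ℕ) < κ i := calc
        (j : ℕ) = j' := hj
        _ < r i' := j'.2
        _ ≤ r i.succ := antitone_right_of_mem_interlacing hκ (Fin.castSucc_lt_iff_succ_le.1 hi)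
        _ ≤ κ i := (mem_interlacing.1 hκ i).1
      rw [extendByLast_castSucc, dif_pos hlt]
      induction i' using Fin.lastCases with
      | last => rw [extendByLast_last]; exact Fin.castSucc_lt_last _
      | cast i' =>
        rw [extendByLast_castSucc]
        split_ifs
        · exact Fin.castSucc_lt_castSucc_iff.2
            (hU.2 i i' _ _ (Fin.castSucc_lt_castSucc_iff.1 hi) hj)
        · exact Fin.castSucc_lt_last _

lemma IsSsyt.exists_extendByLast_eq (hr : Antitone r)
    {T : ∀ i : Fin (k + 1), Fin (r i) → Fin (k + 1)} (hT : IsSsyt r T) :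
    ∃ U : ∀ i : Fin k, Fin (shapeBelowLast T i) → Fin k,
      IsSsyt (shapeBelowLast T) U ∧ extendByLast r U = T := by
  have hle : ∀ i, shapeBelowLast T i ≤ r i.castSucc := fun i =>
    (mem_interlacing.1 (hT.shapeBelowLast_mem_interlacing hr) i).2
  have ne_last : ∀ i (j : Fin (shapeBelowLast T i)),
      T i.castSucc (j.castLE (hle i)) ≠ Fin.last k := fun i j =>
    ((hT.lt_last_iff i (j.castLE (hle i))).2 j.2).ne
  refine ⟨fun i j => (T i.castSucc (j.castLE (hle i))).castPred (ne_last i j), ⟨?_, ?_⟩, ?_⟩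
  · exact fun i j j' h => hT.1 i.castSucc (j.castLE (hle i)) (j'.castLE (hle i)) h
  · exact fun i i' j j' hi h =>
      hT.2 i.castSucc i'.castSucc (j.castLE (hle i)) (j'.castLE (hle i')) hi h
  · funext i j
    induction i using Fin.lastCases with
    | last =>
      rw [extendByLast_last]
      exact (Fin.last_le_iff.1 (Fin.le_def.2 (hT.row_le_entry hr (Fin.last k) j))).symm
    | cast i =>
      rw [extendByLast_castSucc]
      split_ifs with h
      · exact Fin.castSucc_castPred _ _
      · rw [← hT.lt_last_iff, Fin.lt_last_iff_ne_last, not_not] at h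
        exact h.symm

lemma prod_dite_val_lt {M : Type*} [CommMonoid M] {a b : ℕ} (hab : a ≤ b) (f : Fin a → M) (c : M) :
    ∏ j : Fin b, (if h : (j : ℕ) < a then f ⟨j, h⟩ else c) = (∏ j, f j) * c ^ (b - a) := by
  obtain ⟨d, rfl⟩ := Nat.exists_eq_add_of_le hab
  rw [Fin.prod_univ_add]
  simp

lemma prod_extendByLast {R : Type*} [CommSemiring R] (hκ : κ ∈ interlacing r)
    (U : ∀ i : Fin k, Fin (κ i) → Fin N) (y : Fin (N + 1) → R) :
    ∏ i, ∏ j, y (extendByLast r U i j) =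
      (∏ i, ∏ j, y (U i j).castSucc) * y (Fin.last N) ^ (∑ i, r i - ∑ i, κ i) := by
  have prod_row : ∀ i : Fin k, ∏ j, y (extendByLast r U i.castSucc j) =
      (∏ j, y (U i j).castSucc) * y (Fin.last N) ^ (r i.castSucc - κ i) := by
    intro i
    rw [← prod_dite_val_lt (mem_interlacing.1 hκ i).2]
    simp only [extendByLast_castSucc, apply_dite y]
  rw [pow_sum_sub_sum_of_mem_interlacing _ hκ, Fin.prod_univ_castSucc,
    prod_congr rfl fun i _ => prod_row i, prod_mul_distrib]
  simp only [extendByLast_last, prod_const, card_univ, Fintype.card_fin]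
  ring

variable {R : Type*} [CommRing R]

theorem schurPoly_succ (hr : Antitone r) (y : Fin (k + 1) → R) :
    schurPoly (k + 1) r y = ∑ κ ∈ interlacing r,
      schurPoly k κ (fun i => y i.castSucc) * y (Fin.last k) ^ (∑ i, r i - ∑ i, κ i) := by
  have shape_mem : ∀ T ∈ ssytFinset (k + 1) r, shapeBelowLast T ∈ interlacing r := fun T hT =>
    (mem_ssytFinset.1 hT).shapeBelowLast_mem_interlacing hr
  simp only [schurPoly, sum_mul]
  rw [← sum_fiberwise_of_maps_to shape_mem]
  refine sum_congr rfl fun κ hκ => ?_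
  have hle : ∀ i, κ i ≤ r i.castSucc := fun i => (mem_interlacing.1 hκ i).2
  refine (sum_nbij (extendByLast r) (fun U hU => ?_) (extendByLast_injective hle).injOn
    (fun T hT => ?_) fun U _ => (prod_extendByLast hκ U y).symm).symm
  · exact mem_filter.2 ⟨mem_ssytFinset.2 (isSsyt_extendByLast hκ (mem_ssytFinset.1 hU)),
      shapeBelowLast_extendByLast hle U⟩
  · obtain ⟨T_mem, rfl⟩ := mem_filter.1 hT
    obtain ⟨U, hU, hUT⟩ := (mem_ssytFinset.1 T_mem).exists_extendByLast_eq hr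
    exact ⟨U, mem_ssytFinset.2 hU, hUT⟩

lemma schurPoly_zero_shape (x : Fin N → R) : schurPoly N (fun _ : Fin m => 0) x = 1 := by
  have ssyt_eq_univ : ssytFinset N (fun _ : Fin m => 0) = univ :=
    eq_univ_of_forall fun _ => mem_ssytFinset.2 ⟨fun _ j => j.elim0, fun _ _ j => j.elim0⟩
  simp [schurPoly, ssyt_eq_univ]

end Branching

/-! ### Exchanging horizontal and vertical strips -/

section Exchange

variable {R : Type*} [CommSemiring R] {k : ℕ}

lemma sum_Icc_add_one_pow_mul_pow (u y : R) {v lo hi : ℕ} (hlo : lo ≤ v + 1) (hhi : v ≤ hi)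
    (hlohi : lo ≤ hi) :
    ∑ q ∈ Icc (max v lo) (min (v + 1) hi), y ^ (q - lo) * u ^ (v + 1 - q) =
      y ^ (v - lo) * (u ^ (1 - if v < hi then 1 else 0) *
        (u + y) ^ ((if lo ≤ v then 1 else 0) + (if v < hi then 1 else 0) - 1)) := by
  rcases hlo.eq_or_lt with rfl | hlo
  · simp [Nat.lt_of_succ_le hlohi]
  have hlo : lo ≤ v := Nat.lt_succ_iff.1 hlo
  rcases hhi.eq_or_lt with rfl | hhi
  · simp [hlo]
  · have Icc_eq_pair : Icc (max v lo) (min (v + 1) hi) = {v, v + 1} := by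
      ext q
      simp only [mem_Icc, mem_insert, mem_singleton]
      omega
    rw [Icc_eq_pair, sum_pair (Nat.ne_of_lt (lt_add_one v)), Nat.sub_add_comm hlo]
    simp only [hlo, hhi, if_true, Nat.sub_self, Nat.add_sub_cancel_left]
    ring

lemma sum_Icc_sub_one_pow_mul_pow (u y : R) {a b p : ℕ} (hba : b ≤ a) (hbp : b ≤ p)
    (hpa : p ≤ a + 1) :
    ∑ q ∈ Icc (max b (p - 1)) (min a p), y ^ (a - q) * u ^ (q + 1 - p) =
      y ^ (a - p) * (u ^ (1 - if b < p then 1 else 0) *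
        (u + y) ^ ((if p ≤ a then 1 else 0) + (if b < p then 1 else 0) - 1)) := by
  have reflect : ∑ q ∈ Icc (max b (p - 1)) (min a p), y ^ (a - q) * u ^ (q + 1 - p) =
      ∑ q ∈ Icc (max a p) (min (a + 1) (a + p - b)), y ^ (q - p) * u ^ (a + 1 - q) := by
    refine sum_nbij' (fun q => a + p - q) (fun q => a + p - q) ?_ ?_ ?_ ?_ ?_ <;>
      intro q hq <;> simp only [mem_Icc] at hq ⊢
    · omega
    · omega
    · omega
    · omega
    · congr 2 <;> omega
  have lt_iff : a < a + p - b ↔ b < p := by omega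
  rw [reflect, sum_Icc_add_one_pow_mul_pow u y hpa (by omega) (by omega)]
  simp only [lt_iff]

lemma filter_interlacing_verticalStrips (ν : Fin (k + 1) → ℕ) {ρ : Fin k → ℕ}
    (hρ : Antitone ρ) :
    (interlacing ν).filter (fun κ => ρ ∈ verticalStrips κ) =
      Fintype.piFinset fun i =>
        Icc (max (ν i.succ) (ρ i - 1)) (min (ν i.castSucc) (ρ i)) := by
  ext κ
  simp only [mem_filter, mem_interlacing, mem_verticalStrips, hρ, and_true,
    Fintype.mem_piFinset, mem_Icc, ← forall_and]
  exact forall_congr' fun i => by omega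

lemma filter_verticalStrips_interlacing (ν : Fin (k + 1) → ℕ) (ρ : Fin k → ℕ) :
    (verticalStrips ν).filter (fun l => ρ ∈ interlacing l) =
      Fintype.piFinset fun i => Icc (max (ν i) ((Fin.snoc ρ 0 : Fin (k + 1) → ℕ) i))
        (min (ν i + 1) ((Fin.cons (ν 0 + 1) ρ : Fin (k + 1) → ℕ) i)) := by
  ext l
  simp only [mem_filter, mem_verticalStrips, Fintype.mem_piFinset, mem_Icc, max_le_iff, le_min_iff]
  have antitone_l : ρ ∈ interlacing l → Antitone l := antitone_right_of_mem_interlacing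
  have snoc_le_iff : (∀ i, (Fin.snoc ρ 0 : Fin (k + 1) → ℕ) i ≤ l i) ↔
      ∀ i : Fin k, ρ i ≤ l i.castSucc := by
    simp [Fin.forall_fin_succ']
  have le_cons_iff : (∀ i, l i ≤ (Fin.cons (ν 0 + 1) ρ : Fin (k + 1) → ℕ) i) ↔
      l 0 ≤ ν 0 + 1 ∧ ∀ i : Fin k, l i.succ ≤ ρ i := by
    simp [Fin.forall_fin_succ]
  rw [mem_interlacing] at antitone_l ⊢
  simp only [forall_and] at antitone_l ⊢
  rw [snoc_le_iff, le_cons_iff]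
  exact ⟨fun ⟨⟨⟨h₁, h₂⟩, _⟩, h₃, h₄⟩ => ⟨⟨h₁, h₄⟩, h₂, h₂ 0, h₃⟩,
    fun ⟨⟨h₁, h₄⟩, h₂, _, h₃⟩ => ⟨⟨⟨h₁, h₂⟩, antitone_l ⟨h₃, h₄⟩⟩, h₃, h₄⟩⟩

lemma sum_interlacing_filter_eq_prod (u y : R) (ν : Fin (k + 1) → ℕ) {ρ : Fin k → ℕ}
    (hρ : Antitone ρ) :
    ∑ κ ∈ (interlacing ν).filter (fun κ => ρ ∈ verticalStrips κ),
        y ^ (∑ i, ν i - ∑ i, κ i) * u ^ (∑ i, κ i + k - ∑ i, ρ i) =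
      y ^ ν (Fin.last k) * ∏ i : Fin k,
        ∑ q ∈ Icc (max (ν i.succ) (ρ i - 1)) (min (ν i.castSucc) (ρ i)),
          y ^ (ν i.castSucc - q) * u ^ (q + 1 - ρ i) := by
  rw [prod_univ_sum, ← filter_interlacing_verticalStrips ν hρ, mul_sum]
  refine sum_congr rfl fun κ hκ => ?_
  obtain ⟨hκ, hρκ⟩ := mem_filter.1 hκ
  rw [pow_sum_sub_sum_of_mem_interlacing y hκ, pow_sum_add_sub_sum_of_mem_verticalStrips u hρκ,
    prod_mul_distrib, mul_assoc]

lemma sum_verticalStrips_filter_eq_prod (u y : R) (ν : Fin (k + 1) → ℕ) (ρ : Fin k → ℕ) :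
    ∑ l ∈ (verticalStrips ν).filter (fun l => ρ ∈ interlacing l),
        y ^ (∑ i, l i - ∑ i, ρ i) * u ^ (∑ i, ν i + (k + 1) - ∑ i, l i) =
      ∏ i, ∑ q ∈ Icc (max (ν i) ((Fin.snoc ρ 0 : Fin (k + 1) → ℕ) i))
          (min (ν i + 1) ((Fin.cons (ν 0 + 1) ρ : Fin (k + 1) → ℕ) i)),
        y ^ (q - (Fin.snoc ρ 0 : Fin (k + 1) → ℕ) i) * u ^ (ν i + 1 - q) := by
  rw [prod_univ_sum, ← filter_verticalStrips_interlacing ν ρ]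
  refine sum_congr rfl fun l hl => ?_
  obtain ⟨hl, hρl⟩ := mem_filter.1 hl
  rw [pow_sum_sub_sum_of_mem_interlacing y hρl, pow_sum_add_sub_sum_of_mem_verticalStrips u hl,
    prod_mul_distrib, Fin.prod_univ_castSucc fun i => y ^ _]
  simp only [Fin.snoc_castSucc, Fin.snoc_last, Nat.sub_zero]
  ring

lemma prod_pow_mul_pow_eq_mul_prod_shift (u c : R) {α β : Fin (k + 1) → ℕ}
    (hα : α (Fin.last k) = 1) (hβ : β 0 = 1) (h : ∀ i, 1 ≤ α i + β i)
    (h' : ∀ i : Fin k, 1 ≤ α i.castSucc + β i.succ) :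
    ∏ i, (u ^ (1 - β i) * c ^ (α i + β i - 1)) =
      c * ∏ i : Fin k, (u ^ (1 - β i.succ) * c ^ (α i.castSucc + β i.succ - 1)) := by
  have exponent_shift :
      ∑ i, (α i + β i - 1) = ∑ i : Fin k, (α i.castSucc + β i.succ - 1) + 1 := by
    have card_le : k ≤ ∑ i : Fin k, (α i.castSucc + β i.succ) := by
      simpa using sum_le_sum fun i (_ : i ∈ univ) => h' i
    rw [sum_tsub_distrib _ fun i _ => h i, sum_tsub_distrib _ fun i _ => h' i]
    simp only [sum_add_distrib, sum_const, card_univ, Fintype.card_fin, smul_eq_mul,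
      mul_one] at card_le ⊢
    rw [Fin.sum_univ_castSucc α, Fin.sum_univ_succ β, hα, hβ]
    omega
  simp only [prod_mul_distrib, prod_pow_eq_pow_sum, exponent_shift,
    Fin.sum_univ_succ fun i => 1 - β i, hβ]
  ring

lemma snoc_zero_le_cons {ρ : Fin k → ℕ} (hρ : Antitone ρ) {c : ℕ}
    (hc : (Fin.snoc ρ 0 : Fin (k + 1) → ℕ) 0 ≤ c) (i : Fin (k + 1)) :
    (Fin.snoc ρ 0 : Fin (k + 1) → ℕ) i ≤ (Fin.cons c ρ : Fin (k + 1) → ℕ) i := by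
  induction i using Fin.cases with
  | zero => exact hc
  | succ i =>
    rw [Fin.cons_succ]
    cases k with
    | zero => exact i.elim0
    | succ k =>
      induction i using Fin.lastCases with
      | last => rw [Fin.succ_last, Fin.snoc_last]; exact Nat.zero_le _
      | cast i => rw [Fin.succ_castSucc, Fin.snoc_castSucc]; exact hρ i.castSucc_le_succ

-- Up to the common power of `y`, the factor of row `i` is `w (α i) (β (i + 1))` on the left and
-- `w (α i) (β i)` on the right, where `α i = [ρ i ≤ ν i]`, `β i = [ν i < ρ (i - 1)]` and
-- `w α β = u ^ (1 - β) * (u + y) ^ (α + β - 1)`: shifting `β` only costs one factor `u + y`.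
lemma add_mul_prod_sum_eq_prod_sum (u y : R) {ν : Fin (k + 1) → ℕ} {ρ : Fin k → ℕ}
    (hν : Antitone ν) (hρ : Antitone ρ) (hsucc : ∀ i, ν i.succ ≤ ρ i)
    (hcast : ∀ i, ρ i ≤ ν i.castSucc + 1) :
    (u + y) * (y ^ ν (Fin.last k) * ∏ i : Fin k,
        ∑ q ∈ Icc (max (ν i.succ) (ρ i - 1)) (min (ν i.castSucc) (ρ i)),
          y ^ (ν i.castSucc - q) * u ^ (q + 1 - ρ i)) =
      ∏ i, ∑ q ∈ Icc (max (ν i) ((Fin.snoc ρ 0 : Fin (k + 1) → ℕ) i))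
          (min (ν i + 1) ((Fin.cons (ν 0 + 1) ρ : Fin (k + 1) → ℕ) i)),
        y ^ (q - (Fin.snoc ρ 0 : Fin (k + 1) → ℕ) i) * u ^ (ν i + 1 - q) := by
  set lo : Fin (k + 1) → ℕ := Fin.snoc ρ 0
  set hi : Fin (k + 1) → ℕ := Fin.cons (ν 0 + 1) ρ
  have lo_castSucc : ∀ i : Fin k, lo i.castSucc = ρ i := fun i => Fin.snoc_castSucc ..
  have lo_last : lo (Fin.last k) = 0 := Fin.snoc_last ..
  have hi_succ : ∀ i : Fin k, hi i.succ = ρ i := fun i => Fin.cons_succ ..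
  have hi_zero : hi 0 = ν 0 + 1 := Fin.cons_zero ..
  have ν_succ_le : ∀ i : Fin k, ν i.succ ≤ ν i.castSucc := fun i => hν i.castSucc_le_succ
  have lo_le : ∀ i, lo i ≤ ν i + 1 := Fin.forall_fin_succ'.2
    ⟨fun i => lo_castSucc i ▸ hcast i, lo_last ▸ Nat.zero_le _⟩
  have le_hi : ∀ i, ν i ≤ hi i := Fin.forall_fin_succ.2
    ⟨hi_zero ▸ Nat.le_succ _, fun i => hi_succ i ▸ hsucc i⟩
  have lo_le_hi : ∀ i, lo i ≤ hi i := snoc_zero_le_cons hρ (lo_le 0)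
  have left_factor := fun i => sum_Icc_sub_one_pow_mul_pow u y (ν_succ_le i) (hsucc i) (hcast i)
  have right_factor := fun i => sum_Icc_add_one_pow_mul_pow u y (lo_le i) (le_hi i) (lo_le_hi i)
  have shift := prod_pow_mul_pow_eq_mul_prod_shift u (u + y)
    (α := fun i => if lo i ≤ ν i then 1 else 0) (β := fun i => if ν i < hi i then 1 else 0)
    (by simp [lo_last]) (by simp [hi_zero]) (by grind) (by grind)
  simp only [left_factor, right_factor]
  rw [prod_mul_distrib (s := (univ : Finset (Fin k))),
    prod_mul_distrib (s := (univ : Finset (Fin (k + 1)))), shift, Fin.prod_univ_castSucc]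
  simp only [lo_castSucc, lo_last, hi_succ, Nat.sub_zero]
  ring

theorem add_mul_sum_filter_interlacing (u y : R) {ν : Fin (k + 1) → ℕ}
    {ρ : Fin k → ℕ} (hν : Antitone ν) (hρ : Antitone ρ) :
    (u + y) * ∑ κ ∈ (interlacing ν).filter (fun κ => ρ ∈ verticalStrips κ),
        y ^ (∑ i, ν i - ∑ i, κ i) * u ^ (∑ i, κ i + k - ∑ i, ρ i) =
      ∑ l ∈ (verticalStrips ν).filter (fun l => ρ ∈ interlacing l),
        y ^ (∑ i, l i - ∑ i, ρ i) * u ^ (∑ i, ν i + (k + 1) - ∑ i, l i) := by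
  by_cases compatible : ∀ i, ν i.succ ≤ ρ i ∧ ρ i ≤ ν i.castSucc + 1
  · rw [sum_interlacing_filter_eq_prod u y ν hρ, sum_verticalStrips_filter_eq_prod]
    exact add_mul_prod_sum_eq_prod_sum u y hν hρ (fun i => (compatible i).1)
      fun i => (compatible i).2
  · obtain ⟨i, hi⟩ := not_forall.1 compatible
    have left_empty : (interlacing ν).filter (fun κ => ρ ∈ verticalStrips κ) = ∅ := by
      refine filter_eq_empty_iff.2 fun κ hκ hρκ => hi ?_
      have := mem_interlacing.1 hκ i
      have := (mem_verticalStrips.1 hρκ).1 i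
      omega
    have right_empty : (verticalStrips ν).filter (fun l => ρ ∈ interlacing l) = ∅ := by
      refine filter_eq_empty_iff.2 fun l hl hρl => hi ?_
      have := mem_interlacing.1 hρl i
      have := (mem_verticalStrips.1 hl).1 i.succ
      have := (mem_verticalStrips.1 hl).1 i.castSucc
      omega
    rw [left_empty, right_empty, sum_empty, sum_empty, mul_zero]

theorem add_mul_sum_interlacing_sum_verticalStrips (u y : R) {ν : Fin (k + 1) → ℕ}
    (hν : Antitone ν) (f : (Fin k → ℕ) → R) :
    (u + y) * ∑ κ ∈ interlacing ν, ∑ ρ ∈ verticalStrips κ,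
        f ρ * (y ^ (∑ i, ν i - ∑ i, κ i) * u ^ (∑ i, κ i + k - ∑ i, ρ i)) =
      ∑ l ∈ verticalStrips ν, ∑ ρ ∈ interlacing l,
        f ρ * (y ^ (∑ i, l i - ∑ i, ρ i) * u ^ (∑ i, ν i + (k + 1) - ∑ i, l i)) := by
  have hν₀ : ν ∈ boxPartitions (k + 1) (ν 0) := mem_boxPartitions.2 ⟨fun i => hν i.zero_le, hν⟩
  have left_comm : ∀ κ ρ, κ ∈ interlacing ν ∧ ρ ∈ verticalStrips κ ↔
      κ ∈ (interlacing ν).filter (fun κ => ρ ∈ verticalStrips κ) ∧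
        ρ ∈ boxPartitions k (ν 0 + 1) := by
    intro κ ρ
    rw [mem_filter, iff_self_and]
    exact fun ⟨hκ, hρ⟩ => mem_boxPartitions_of_mem_verticalStrips
      (mem_boxPartitions_of_mem_interlacing hν₀ hκ) hρ
  have right_comm : ∀ l ρ, l ∈ verticalStrips ν ∧ ρ ∈ interlacing l ↔
      l ∈ (verticalStrips ν).filter (fun l => ρ ∈ interlacing l) ∧
        ρ ∈ boxPartitions k (ν 0 + 1) := by
    intro l ρ
    rw [mem_filter, iff_self_and]
    exact fun ⟨hl, hρ⟩ => mem_boxPartitions_of_mem_interlacing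
      (mem_boxPartitions_of_mem_verticalStrips hν₀ hl) hρ
  rw [sum_comm' left_comm, sum_comm' right_comm, mul_sum]
  refine sum_congr rfl fun ρ hρ => ?_
  rw [← mul_sum, ← mul_sum, mul_left_comm,
    add_mul_sum_filter_interlacing u y hν (mem_boxPartitions.1 hρ).2]

end Exchange

/-! ### The dual Pieri rule -/

theorem schurPoly_mul_prod_add {R : Type*} [CommRing R] {k : ℕ} (u : R) {ν : Fin k → ℕ}
    (hν : Antitone ν) (y : Fin k → R) :
    schurPoly k ν y * ∏ j, (u + y j) =
      ∑ l ∈ verticalStrips ν, schurPoly k l y * u ^ (∑ i, ν i + k - ∑ i, l i) := by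
  induction k with
  | zero =>
    have verticalStrips_eq : verticalStrips ν = {ν} := by
      ext l
      simp [mem_verticalStrips, Subsingleton.elim l ν, hν]
    simp [verticalStrips_eq]
  | succ k ih =>
    let Y := y (Fin.last k)
    let s (ρ : Fin k → ℕ) : R := schurPoly k ρ fun i => y i.castSucc
    calc schurPoly (k + 1) ν y * ∏ j, (u + y j)
      _ = (u + Y) * ∑ κ ∈ interlacing ν,
            (s κ * ∏ j : Fin k, (u + y j.castSucc)) * Y ^ (∑ i, ν i - ∑ i, κ i) := by
        rw [schurPoly_succ hν, Fin.prod_univ_castSucc, sum_mul, mul_sum]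
        exact sum_congr rfl fun κ _ => by ring
      _ = (u + Y) * ∑ κ ∈ interlacing ν, ∑ ρ ∈ verticalStrips κ,
            s ρ * (Y ^ (∑ i, ν i - ∑ i, κ i) * u ^ (∑ i, κ i + k - ∑ i, ρ i)) := by
        refine congrArg _ (sum_congr rfl fun κ hκ => ?_)
        rw [ih (antitone_left_of_mem_interlacing hκ), sum_mul]
        exact sum_congr rfl fun ρ _ => by ring
      _ = ∑ l ∈ verticalStrips ν, ∑ ρ ∈ interlacing l,
            s ρ * (Y ^ (∑ i, l i - ∑ i, ρ i) * u ^ (∑ i, ν i + (k + 1) - ∑ i, l i)) :=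
        add_mul_sum_interlacing_sum_verticalStrips u Y hν s
      _ = ∑ l ∈ verticalStrips ν, schurPoly (k + 1) l y * u ^ (∑ i, ν i + (k + 1) - ∑ i, l i) := by
        refine sum_congr rfl fun l hl => ?_
        rw [schurPoly_succ (mem_verticalStrips.1 hl).2, sum_mul]
        exact sum_congr rfl fun ρ _ => (mul_assoc ..).symm

/-! ### Conjugate complements -/

/-- The conjugate `λ̄'` of the complement of `l` in the `n × k` rectangle. Its part `j` counts the
boxes outside `l` in column `k - 1 - j` of the rectangle. -/
def conjCompl {n : ℕ} (k : ℕ) (l : Fin n → ℕ) (j : Fin k) : ℕ :=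
  (univ.filter fun i : Fin n => l i < k - (j : ℕ)).card

section ConjCompl

variable {n k : ℕ}

lemma conjCompl_le (l : Fin n → ℕ) (j : Fin k) : conjCompl k l j ≤ n :=
  (card_le_univ _).trans (Fintype.card_fin n).le

lemma conjCompl_antitone (l : Fin n → ℕ) : Antitone (conjCompl k l) := fun a b hab =>
  card_le_card fun i => by
    simp only [mem_filter, mem_univ, true_and]
    exact fun h => h.trans_le (Nat.sub_le_sub_left hab k)

lemma conjCompl_mem_boxPartitions (l : Fin n → ℕ) : conjCompl k l ∈ boxPartitions k n :=
  mem_boxPartitions.2 ⟨conjCompl_le l, conjCompl_antitone l⟩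

lemma conjCompl_add_lt_iff {l : Fin n → ℕ} (hl : Antitone l) (i : Fin n) (j : Fin k) :
    conjCompl k l j + i < n ↔ k ≤ l i + j := by
  have card_add_card := card_filter_add_card_filter_not (s := (univ : Finset (Fin n)))
    fun i => l i < k - (j : ℕ)
  have lt_card_iff := Fin.lt_card_filter_univ_iff_apply_of_imp (j := i)
    (fun i => ¬ l i < k - (j : ℕ)) fun a b hba ha hb => ha ((hl hba).trans_lt hb)
  rw [card_univ, Fintype.card_fin] at card_add_card
  unfold conjCompl
  omega

lemma conjCompl_conjCompl {l : Fin n → ℕ} (hl : l ∈ boxPartitions n k) :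
    conjCompl n (conjCompl k l) = l := by
  obtain ⟨hlk, hl⟩ := mem_boxPartitions.1 hl
  funext i
  have add_lt_iff : ∀ j : Fin k, conjCompl n (conjCompl k l) i + j < k ↔ l i + j < k := by
    intro j
    rw [conjCompl_add_lt_iff (conjCompl_antitone l) j i, ← not_lt, conjCompl_add_lt_iff hl, not_le]
  have hle := conjCompl_le (conjCompl k l) i
  have hli := hlk i
  by_contra hne
  have := add_lt_iff ⟨k - max (conjCompl n (conjCompl k l) i) (l i), by omega⟩
  simp only at this
  omega

lemma sum_conjCompl_add_sum {l : Fin n → ℕ} (hl : ∀ i, l i ≤ k) :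
    ∑ j, conjCompl k l j + ∑ i, l i = n * k := by
  have card_col : ∀ i, (univ.filter fun j : Fin k => l i < k - (j : ℕ)).card = k - l i := by
    intro i
    have lt_sub_comm : ∀ j, l i < k - j ↔ j < k - l i := by omega
    simp only [lt_sub_comm, Fin.card_filter_val_lt, min_eq_right (Nat.sub_le _ _)]
  calc ∑ j, conjCompl k l j + ∑ i, l i
    _ = ∑ i, (k - l i) + ∑ i, l i := by
      simp only [conjCompl, ← card_col, card_filter]
      rw [sum_comm]
    _ = ∑ _i : Fin n, k := by
      rw [← sum_add_distrib]
      exact sum_congr rfl fun i _ => Nat.sub_add_cancel (hl i)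
    _ = n * k := by simp

variable {l : Fin (n + 1) → ℕ} {μ : Fin n → ℕ}

lemma sum_sub_sum_eq_sum_conjCompl_add_sub (hl : ∀ i, l i ≤ k) (hμ : ∀ i, μ i ≤ k) :
    ∑ i, l i - ∑ i, μ i = ∑ j, conjCompl k μ j + k - ∑ j, conjCompl k l j := by
  have size_l := sum_conjCompl_add_sum hl
  have size_μ := sum_conjCompl_add_sum hμ
  rw [add_mul, one_mul] at size_l
  omega

lemma forall_le_castSucc_iff_conjCompl_le_add_one (hl : Antitone l) (hμ : μ ∈ boxPartitions n k) :
    (∀ i, μ i ≤ l i.castSucc) ↔ ∀ j, conjCompl k l j ≤ conjCompl k μ j + 1 := by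
  obtain ⟨hμk, hμ⟩ := mem_boxPartitions.1 hμ
  constructor
  · intro h j
    by_contra! hlt
    have := conjCompl_le l j
    let i : Fin n := ⟨n - 1 - conjCompl k μ j, by omega⟩
    have hi : (i : ℕ) = n - 1 - conjCompl k μ j := rfl
    have l_iff := conjCompl_add_lt_iff hl i.castSucc j
    have μ_iff := conjCompl_add_lt_iff hμ i j
    have le_i := h i
    rw [Fin.val_castSucc] at l_iff
    omega
  · intro h i
    by_contra! hlt
    have := hμk i
    let j : Fin k := ⟨k - μ i, by omega⟩
    have hj : (j : ℕ) = k - μ i := rfl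
    have l_iff := conjCompl_add_lt_iff hl i.castSucc j
    have μ_iff := conjCompl_add_lt_iff hμ i j
    have le_j := h j
    rw [Fin.val_castSucc] at l_iff
    omega

lemma forall_succ_le_iff_conjCompl_le (hl : l ∈ boxPartitions (n + 1) k) (hμ : Antitone μ) :
    (∀ i, l i.succ ≤ μ i) ↔ ∀ j, conjCompl k μ j ≤ conjCompl k l j := by
  obtain ⟨hlk, hl⟩ := mem_boxPartitions.1 hl
  constructor
  · intro h j
    by_contra! hlt
    have := conjCompl_le μ j
    let i : Fin n := ⟨n - 1 - conjCompl k l j, by omega⟩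
    have hi : (i : ℕ) = n - 1 - conjCompl k l j := rfl
    have l_iff := conjCompl_add_lt_iff hl i.succ j
    have μ_iff := conjCompl_add_lt_iff hμ i j
    have le_i := h i
    rw [Fin.val_succ] at l_iff
    omega
  · intro h i
    by_contra! hlt
    have := hlk i.succ
    let j : Fin k := ⟨k - l i.succ, by omega⟩
    have hj : (j : ℕ) = k - l i.succ := rfl
    have l_iff := conjCompl_add_lt_iff hl i.succ j
    have μ_iff := conjCompl_add_lt_iff hμ i j
    have le_j := h j
    rw [Fin.val_succ] at l_iff
    omega

lemma mem_interlacing_iff_conjCompl_mem_verticalStrips (hl : l ∈ boxPartitions (n + 1) k)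
    (hμ : μ ∈ boxPartitions n k) :
    μ ∈ interlacing l ↔ conjCompl k l ∈ verticalStrips (conjCompl k μ) := by
  rw [mem_interlacing, mem_verticalStrips, forall_and, forall_and,
    forall_succ_le_iff_conjCompl_le hl (mem_boxPartitions.1 hμ).2,
    forall_le_castSucc_iff_conjCompl_le_add_one (mem_boxPartitions.1 hl).2 hμ,
    and_iff_left (conjCompl_antitone l)]

lemma sum_filter_interlacing_conjCompl {M : Type*} [AddCommMonoid M] (hμ : μ ∈ boxPartitions n k)
    (f : (Fin k → ℕ) → M) :
    ∑ l ∈ (boxPartitions (n + 1) k).filter (fun l => μ ∈ interlacing l), f (conjCompl k l) =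
      ∑ l ∈ verticalStrips (conjCompl k μ), f l := by
  have conj_conj : ∀ l ∈ verticalStrips (conjCompl k μ),
      conjCompl k (conjCompl (n + 1) l) = l := fun l hl => conjCompl_conjCompl
    (mem_boxPartitions_of_mem_verticalStrips (conjCompl_mem_boxPartitions μ) hl)
  refine sum_nbij' (conjCompl k) (conjCompl (n + 1)) (fun l hl => ?_) (fun l hl => ?_)
    (fun l hl => conjCompl_conjCompl (mem_filter.1 hl).1) conj_conj fun _ _ => rfl
  · obtain ⟨hl, hμl⟩ := mem_filter.1 hl
    exact (mem_interlacing_iff_conjCompl_mem_verticalStrips hl hμ).1 hμl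
  · have hl' : conjCompl (n + 1) l ∈ boxPartitions (n + 1) k := conjCompl_mem_boxPartitions l
    refine mem_filter.2 ⟨hl', (mem_interlacing_iff_conjCompl_mem_verticalStrips hl' hμ).2 ?_⟩
    rwa [conj_conj l hl]

end ConjCompl

/-! ### The dual Cauchy identity -/

theorem sum_schurPoly_mul_schurPoly_conjCompl {R : Type*} [CommRing R] (n k : ℕ) (x : Fin n → R)
    (y : Fin k → R) :
    ∑ l ∈ boxPartitions n k, schurPoly n l x * schurPoly k (conjCompl k l) y =
      ∏ i, ∏ j, (x i + y j) := by
  induction n with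
  | zero =>
    have conjCompl_empty : conjCompl k (fun _ : Fin 0 => 0) = fun _ => 0 := by
      simp [conjCompl, funext_iff]
    simp [boxPartitions_zero_left, conjCompl_empty, schurPoly_zero_shape]
  | succ n ih =>
    let X := x (Fin.last n)
    let s (μ : Fin n → ℕ) : R := schurPoly n μ fun i => x i.castSucc
    calc ∑ l ∈ boxPartitions (n + 1) k, schurPoly (n + 1) l x * schurPoly k (conjCompl k l) y
      _ = ∑ l ∈ boxPartitions (n + 1) k, ∑ μ ∈ interlacing l,
            s μ * X ^ (∑ i, l i - ∑ i, μ i) * schurPoly k (conjCompl k l) y :=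
        sum_congr rfl fun l hl => by rw [schurPoly_succ (mem_boxPartitions.1 hl).2, sum_mul]
      _ = ∑ μ ∈ boxPartitions n k,
            ∑ l ∈ (boxPartitions (n + 1) k).filter (fun l => μ ∈ interlacing l),
              s μ * X ^ (∑ i, l i - ∑ i, μ i) * schurPoly k (conjCompl k l) y := by
        refine sum_comm' fun l μ => ?_
        rw [mem_filter, iff_self_and]
        exact fun ⟨hl, hμ⟩ => mem_boxPartitions_of_mem_interlacing hl hμ
      _ = ∑ μ ∈ boxPartitions n k, ∑ ν ∈ verticalStrips (conjCompl k μ),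
            s μ * (schurPoly k ν y * X ^ (∑ j, conjCompl k μ j + k - ∑ j, ν j)) := by
        refine sum_congr rfl fun μ hμ => ?_
        rw [← sum_filter_interlacing_conjCompl hμ]
        refine sum_congr rfl fun l hl => ?_
        rw [sum_sub_sum_eq_sum_conjCompl_add_sub (mem_boxPartitions.1 (mem_filter.1 hl).1).1
          (mem_boxPartitions.1 hμ).1]
        ring
      _ = ∑ μ ∈ boxPartitions n k, s μ * schurPoly k (conjCompl k μ) y * ∏ j, (X + y j) := by
        refine sum_congr rfl fun μ _ => ?_
        rw [← mul_sum, ← schurPoly_mul_prod_add X (conjCompl_antitone μ), mul_assoc]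
      _ = ∏ i, ∏ j, (x i + y j) := by
        rw [← sum_mul, ih, Fin.prod_univ_castSucc]

/-- Alternative dual Cauchy identity: summing over partitions `λ` inside an `n × k`
rectangle, `Σ_λ s_λ(x) s_{λ̄'}(y) = ∏_{i,j} (x_i + y_j)`, where `λ̄'` is the conjugate
of the complement of `λ` in the rectangle (so `λ̄'_j = #{i : λ_i ≤ k - j}`). -/
theorem stmt7 {R : Type*} [CommRing R] (n k : ℕ) (x : Fin n → R) (y : Fin k → R) :
    ∑ l ∈ (Finset.univ.filter
        (fun l : Fin n → Fin (k + 1) => ∀ i j : Fin n, i ≤ j → l j ≤ l i)),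
      schurPoly n (fun i => (l i : ℕ)) x
        * schurPoly k (fun j : Fin k =>
            (Finset.univ.filter (fun i : Fin n => (l i : ℕ) < k - (j : ℕ))).card) y
      = ∏ i : Fin n, ∏ j : Fin k, (x i + y j) := by
  exact (sum_filter_fin_eq_sum_boxPartitions
    fun l => schurPoly n l x * schurPoly k (conjCompl k l) y).trans
      (sum_schurPoly_mul_schurPoly_conjCompl n k x y)

end
end

section
/- Let λ be a partition inside an n×k rectangle, let M(λ) = det[ C(k+i, j+λ_{n-j}) ]_{i,j=0}^{n-1}, and let λ̄' be the conjugate of the complement of λ in the n×k rectangle. Then M(λ) equals the number of semistandard Young tableaux of shape λ̄' with entries in {1,...,k}. Equivalently, M(λ) = (∏_{m=0}^{n-1} (k+m)!) · (∏_{1≤i<j≤n} (a_i - a_j)) / (∏_{i=1}^{n} a_i! (k+n-1-a_i)!) with a_i = λ_i + n - i. -/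
open Finset

noncomputable section
open scoped Classical

/-!
Record a semistandard tableau by the sets of entries of its columns. Deleting the largest letter
from all columns lowers the column heights `c` by the indicator `1_E` of the set `E` of columns
that contained it, and the tableaux obtained in this way are all those with column heights
`c - 1_E`; there are none unless `c - 1_E` is antitone. On the other side, Pascal's rule splits each
row of `det[C(N + 1 + i, c_p - p + i)]` in two, and multilinearity expands the determinant as a
sum over the same sets `E`; if `c - 1_E` is not antitone, two adjacent rows coincide and the term
vanishes. Hence the determinant and the number of tableaux satisfy the same recursion in the
number of letters.

For the product formula, write `C(m, a) = m! / (a! (m + i - a)!) · x (x - 1) ⋯ (x - i + 1)` with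
`x = m + i - a`. In row `i` of the determinant read from the bottom, `m + i = k + n - 1` does not
depend on `i`, so `x` depends on the column only, and up to row and column factors the determinant
is the Vandermonde determinant of the numbers `x`.
-/

section ProductFormula

theorem choose_mul_factorial_mul_factorial_add_sub {m i a : ℕ} (ha : a ≤ m + i) :
    m.choose a * (a.factorial * (m + i - a).factorial)
      = m.factorial * (m + i - a).descFactorial i := by
  rcases lt_or_ge m a with hma | ham
  · rw [Nat.choose_eq_zero_of_lt hma, Nat.descFactorial_of_lt (by omega), zero_mul, mul_zero]
  · have hdesc : (m - a).factorial * (m + i - a).descFactorial i = (m + i - a).factorial := by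
      rw [← Nat.factorial_mul_descFactorial (show i ≤ m + i - a by omega),
        show m + i - a - i = m - a by omega]
    rw [← hdesc, ← Nat.choose_mul_factorial_mul_factorial ham]
    ring

theorem factorial_mul_factorial_mul_choose_add_rev {n k a : ℕ} (ha : a ≤ k + n - 1) (i : Fin n) :
    a.factorial * (k + n - 1 - a).factorial * (k + i.rev : ℕ).choose a
      = (k + i.rev : ℕ).factorial * (k + n - 1 - a).descFactorial i := by
  have hsum : k + n - 1 = k + (i.rev : ℕ) + i := by
    rw [Fin.val_rev]
    omega
  rw [hsum] at ha ⊢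
  rw [mul_comm, choose_mul_factorial_mul_factorial_add_sub ha]

theorem det_descFactorial {R : Type*} [CommRing R] [IsDomain R] {n : ℕ} (x : Fin n → ℕ) :
    Matrix.det (Matrix.of fun i j : Fin n => ((x j).descFactorial i : R))
      = ∏ i : Fin n, ∏ j ∈ Ioi i, ((x j : R) - x i) := by
  rw [← Matrix.det_vandermonde, ← Matrix.det_transpose,
    Matrix.det_eval_matrixOfPolynomials_eq_det_vandermonde (fun j => (x j : R))
      (fun i => descPochhammer R i) (fun i => descPochhammer_natDegree R i)
      (fun i => monic_descPochhammer R i)]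
  congr 1
  ext j i
  exact (descPochhammer_eval_eq_descFactorial R (x j) i).symm

theorem det_choose_rev {K : Type*} [Field K] [CharZero K] {n k : ℕ} (a : Fin n → ℕ)
    (ha : ∀ j, a j ≤ k + n - 1) :
    Matrix.det (Matrix.of fun i j : Fin n => ((k + i.rev : ℕ).choose (a j) : K))
      = (∏ m ∈ range n, ((k + m).factorial : K))
        * (∏ i : Fin n, ∏ j ∈ Ioi i, ((a i : K) - a j))
        / ∏ j : Fin n, ((a j).factorial : K) * ((k + n - 1 - a j).factorial : K) := by
  have hden : ∏ j : Fin n, ((a j).factorial : K) * ((k + n - 1 - a j).factorial : K) ≠ 0 :=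
    prod_ne_zero_iff.2 fun j _ => by simp [Nat.factorial_ne_zero]
  have hfactorials : ∏ i : Fin n, ((k + i.rev : ℕ).factorial : K)
      = ∏ m ∈ range n, ((k + m).factorial : K) := by
    rw [← Fin.prod_univ_eq_prod_range (fun m => ((k + m).factorial : K))]
    exact Equiv.prod_comp Fin.revPerm fun i : Fin n => ((k + i : ℕ).factorial : K)
  have hdiff : ∀ i j : Fin n,
      ((k + n - 1 - a j : ℕ) : K) - ((k + n - 1 - a i : ℕ) : K) = a i - a j := by
    intro i j
    rw [Nat.cast_sub (ha i), Nat.cast_sub (ha j)]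
    ring
  rw [eq_div_iff hden]
  calc
    _ = Matrix.det (Matrix.of fun i j : Fin n =>
          ((a j).factorial : K) * ((k + n - 1 - a j).factorial : K)
            * ((k + i.rev : ℕ).choose (a j) : K)) := by
        rw [mul_comm, ← Matrix.det_mul_row]
        rfl
    _ = Matrix.det (Matrix.of fun i j : Fin n =>
          ((k + i.rev : ℕ).factorial : K) * ((k + n - 1 - a j).descFactorial i : K)) := by
        congr 2
        ext i j
        exact_mod_cast factorial_mul_factorial_mul_choose_add_rev (ha j) i
    _ = (∏ i : Fin n, ((k + i.rev : ℕ).factorial : K))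
          * Matrix.det (Matrix.of fun i j : Fin n => ((k + n - 1 - a j).descFactorial i : K)) :=
        Matrix.det_mul_column _ _
    _ = _ := by
        simp only [hfactorials, det_descFactorial, hdiff]

end ProductFormula

section ColumnFamilies

variable {ι : Type*} [Fintype ι] [Preorder ι]

/-- Families of column sets `S p ⊆ {0, …, N - 1}` with `#(S p) = c p` such that the `x`-th smallest
entry of a column is at most that of every later column of height greater than `x`. This row
condition is encoded by counting entries below each threshold `t`. The heights are integers so that
they can be lowered freely; a negative height leaves no family. -/
def columnFamilies (N : ℕ) (c : ι → ℤ) : Finset (ι → Finset ℕ) :=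
  {S ∈ Fintype.piFinset fun _ => (range N).powerset |
    (∀ p, (#(S p) : ℤ) = c p) ∧ ∀ t, Antitone fun p => #{x ∈ S p | x < t}}

variable {N : ℕ} {c : ι → ℤ} {S : ι → Finset ℕ}

theorem mem_columnFamilies :
    S ∈ columnFamilies N c ↔ (∀ p, S p ⊆ range N) ∧ (∀ p, (#(S p) : ℤ) = c p) ∧
      ∀ t, Antitone fun p => #{x ∈ S p | x < t} := by
  simp [columnFamilies]

theorem filter_lt_eq_self_of_subset_range {A : Finset ℕ} {t : ℕ} (hA : A ⊆ range N) (ht : N ≤ t) :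
    {x ∈ A | x < t} = A :=
  filter_true_of_mem fun _ hx => (mem_range.1 (hA hx)).trans_le ht

theorem antitone_of_mem_columnFamilies (hS : S ∈ columnFamilies N c) : Antitone c := by
  obtain ⟨hsub, hcard, hanti⟩ := mem_columnFamilies.1 hS
  intro p q hpq
  have hcount := hanti N hpq
  simp only [filter_lt_eq_self_of_subset_range (hsub _) le_rfl] at hcount
  rw [← hcard p, ← hcard q]
  exact_mod_cast hcount

theorem columnFamilies_eq_empty_of_not_antitone (hc : ¬ Antitone c) : columnFamilies N c = ∅ :=
  eq_empty_of_forall_notMem fun _ hS => hc (antitone_of_mem_columnFamilies hS)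

theorem columnFamilies_zero_zero : columnFamilies 0 (0 : ι → ℤ) = {fun _ => ∅} := by
  ext S
  rw [mem_columnFamilies, mem_singleton]
  constructor
  · rintro ⟨hsub, -, -⟩
    exact funext fun p => subset_empty.1 (hsub p)
  · rintro rfl
    simp [antitone_const]

theorem columnFamilies_zero_of_ne_zero (hc : c ≠ 0) : columnFamilies 0 c = ∅ := by
  refine eq_empty_of_forall_notMem fun S hS => hc (funext fun p => ?_)
  obtain ⟨hsub, hcard, -⟩ := mem_columnFamilies.1 hS
  rw [← hcard p, subset_empty.1 (hsub p), card_empty, Nat.cast_zero, Pi.zero_apply]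

theorem cast_card_erase_eq_sub_iff (A : Finset ℕ) (N : ℕ) (z : ℤ) :
    (#(A.erase N) : ℤ) = z - (if N ∈ A then 1 else 0) ↔ (#A : ℤ) = z := by
  split_ifs with hN
  · rw [← card_erase_add_one hN]
    push_cast
    omega
  · rw [erase_eq_of_notMem hN, sub_zero]

theorem filter_lt_erase_of_le (A : Finset ℕ) {t : ℕ} (ht : t ≤ N) :
    {x ∈ A.erase N | x < t} = {x ∈ A | x < t} := by
  rw [filter_erase, erase_eq_of_notMem (by simp [ht])]

theorem mem_columnFamilies_succ (hc : Antitone c) :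
    S ∈ columnFamilies (N + 1) c ↔
      (fun p => (S p).erase N) ∈ columnFamilies N fun p => c p - if N ∈ S p then 1 else 0 := by
  simp only [mem_columnFamilies, cast_card_erase_eq_sub_iff, range_add_one, subset_insert_iff]
  refine and_congr_right fun hsub => and_congr_right fun hcard => ⟨fun h t => ?_, fun h t => ?_⟩
  · have hmin : ∀ p, {x ∈ (S p).erase N | x < t} = {x ∈ S p | x < min t N} := by
      intro p
      rw [← filter_lt_erase_of_le (S p) (min_le_right t N)]
      refine filter_congr fun x hx => ?_
      have := mem_range.1 (hsub p hx)
      omega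
    simpa only [hmin] using h (min t N)
  · rcases le_or_gt t N with ht | ht
    · simpa only [filter_lt_erase_of_le _ ht] using h t
    · have hall : ∀ p, {x ∈ S p | x < t} = S p := fun p =>
        filter_lt_eq_self_of_subset_range (range_add_one ▸ subset_insert_iff.2 (hsub p)) ht
      intro p q hpq
      simp only [hall]
      exact_mod_cast (hcard q).trans_le ((hc hpq).trans_eq (hcard p).symm)

theorem card_columnFamilies_succ [DecidableEq ι] (hc : Antitone c) :
    #(columnFamilies (N + 1) c)
      = ∑ E : Finset ι, #(columnFamilies N fun p => c p - if p ∈ E then 1 else 0) := by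
  rw [card_eq_sum_card_fiberwise (f := fun S => ({p | N ∈ S p} : Finset ι)) (t := univ)
    fun _ _ => mem_coe.2 (mem_univ _)]
  refine sum_congr rfl fun E _ => ?_
  refine card_nbij' (fun S p => (S p).erase N) (fun S p => if p ∈ E then insert N (S p) else S p)
    ?_ ?_ ?_ ?_
  · intro S hS
    obtain ⟨hmem, rfl⟩ := mem_filter.1 hS
    simpa using (mem_columnFamilies_succ hc).1 hmem
  · intro S hS
    have hN : ∀ p, N ∉ S p := fun p h =>
      notMem_range_self ((mem_columnFamilies.1 hS).1 p h)
    have hmem : ∀ p, N ∈ (if p ∈ E then insert N (S p) else S p) ↔ p ∈ E := by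
      intro p
      split_ifs with hp <;> simp [hp, hN p]
    have herase : ∀ p, (if p ∈ E then insert N (S p) else S p).erase N = S p := by
      intro p
      split_ifs <;> simp [hN p]
    refine mem_filter.2 ⟨(mem_columnFamilies_succ hc).2 ?_, ?_⟩
    · simpa only [hmem, herase, mem_coe] using hS
    · simp only [hmem, filter_mem_eq_inter, univ_inter]
  · intro S hS
    obtain ⟨-, rfl⟩ := mem_filter.1 hS
    funext p
    by_cases hp : N ∈ S p <;> simp [hp]
  · intro S hS
    funext p
    have hN : N ∉ S p := fun h => notMem_range_self ((mem_columnFamilies.1 hS).1 p h)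
    by_cases hp : p ∈ E <;> simp [hp, hN]

end ColumnFamilies

section Determinant

/-- The binomial coefficient `C(m, a)` with integer lower index, zero for `a < 0`. -/
def chooseInt (m : ℕ) : ℤ → ℕ
  | Int.ofNat a => m.choose a
  | Int.negSucc _ => 0

theorem chooseInt_natCast (m a : ℕ) : chooseInt m a = m.choose a := rfl

theorem chooseInt_zero (m : ℕ) : chooseInt m 0 = 1 := Nat.choose_zero_right m

theorem chooseInt_of_neg (m : ℕ) {a : ℤ} (ha : a < 0) : chooseInt m a = 0 := by
  obtain ⟨b, rfl⟩ := Int.eq_negSucc_of_lt_zero ha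
  rfl

theorem chooseInt_of_lt {m : ℕ} {a : ℤ} (ha : m < a) : chooseInt m a = 0 := by
  lift a to ℕ using by omega
  exact Nat.choose_eq_zero_of_lt (by exact_mod_cast ha)

theorem chooseInt_succ (m : ℕ) (a : ℤ) :
    chooseInt (m + 1) a = chooseInt m (a - 1) + chooseInt m a := by
  rcases lt_trichotomy a 0 with ha | rfl | ha
  · rw [chooseInt_of_neg _ ha, chooseInt_of_neg _ ha, chooseInt_of_neg _ (by omega)]
  · rw [chooseInt_of_neg m (by omega)]
    rw [chooseInt_zero, chooseInt_zero]
  · obtain ⟨b, rfl⟩ : ∃ b : ℕ, a = (b + 1 : ℕ) := ⟨(a - 1).toNat, by omega⟩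
    rw [show ((b + 1 : ℕ) : ℤ) - 1 = b by omega]
    exact Nat.choose_succ_succ m b

theorem chooseInt_sub_natCast (m a : ℕ) : chooseInt m (m - a) = m.choose a := by
  rcases le_or_gt a m with ha | ha
  · rw [← Nat.cast_sub ha, chooseInt_natCast, Nat.choose_symm ha]
  · rw [chooseInt_of_neg _ (by omega), Nat.choose_eq_zero_of_lt ha]

variable (R : Type*) [CommRing R] {n : ℕ}

/-- The flagged dual Jacobi–Trudi matrix `[e_{c_p - p + i}(1^{N + i})]` of the shape with column
heights `c`, where `e_a(1^m) = C(m, a)`. -/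
def columnMatrix (N : ℕ) (c : Fin n → ℤ) : Matrix (Fin n) (Fin n) R :=
  Matrix.of fun p i => (chooseInt (N + i) (c p - p + i) : R)

theorem det_columnMatrix_zero_zero : (columnMatrix R 0 (0 : Fin n → ℤ)).det = 1 := by
  rw [Matrix.det_of_isUpperTriangular]
  · refine prod_eq_one fun p _ => ?_
    simp only [columnMatrix, Matrix.of_apply, Pi.zero_apply]
    rw [sub_add_cancel, chooseInt_zero, Nat.cast_one]
  · intro p i hip
    have : (i : ℕ) < p := hip
    simp only [columnMatrix, Matrix.of_apply, Pi.zero_apply]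
    rw [chooseInt_of_neg _ (by omega), Nat.cast_zero]

theorem det_columnMatrix_zero_of_ne_zero {c : Fin n → ℤ} (hc : Antitone c) (hne : c ≠ 0) :
    (columnMatrix R 0 c).det = 0 := by
  obtain ⟨p, hp⟩ := Function.ne_iff.1 hne
  rcases n with _ | n
  · exact p.elim0
  rcases lt_or_gt_of_ne hp with hneg | hpos
  · refine Matrix.det_eq_zero_of_row_eq_zero (Fin.last n) fun i => ?_
    have hlast : c (Fin.last n) < 0 := (hc (Fin.le_last p)).trans_lt hneg
    have hi : (i : ℕ) ≤ n := Fin.is_le i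
    simp only [columnMatrix, Matrix.of_apply, Fin.val_last]
    rw [chooseInt_of_neg _ (by omega), Nat.cast_zero]
  · refine Matrix.det_eq_zero_of_row_eq_zero 0 fun i => ?_
    have hfirst : 0 < c 0 := lt_of_lt_of_le hpos (hc (Fin.zero_le p))
    simp only [columnMatrix, Matrix.of_apply, Fin.val_zero]
    rw [chooseInt_of_lt (by push_cast; omega), Nat.cast_zero]

theorem columnMatrix_succ (N : ℕ) (c : Fin n → ℤ) :
    columnMatrix R (N + 1) c = columnMatrix R N (fun p => c p - 1) + columnMatrix R N c := by
  ext p i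
  simp only [columnMatrix, Matrix.of_apply, Matrix.add_apply]
  rw [add_right_comm N 1, chooseInt_succ, Nat.cast_add]
  congr 3
  ring

theorem det_columnMatrix_succ (N : ℕ) (c : Fin n → ℤ) :
    (columnMatrix R (N + 1) c).det
      = ∑ E : Finset (Fin n), (columnMatrix R N fun p => c p - if p ∈ E then 1 else 0).det := by
  rw [columnMatrix_succ]
  refine (Matrix.detRowAlternating.toMultilinearMap.map_add_univ (columnMatrix R N fun p => c p - 1)
    (columnMatrix R N c)).trans (sum_congr rfl fun E _ => congrArg Matrix.det ?_)
  ext p i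
  by_cases hp : p ∈ E <;> simp [columnMatrix, piecewise, hp]

theorem det_columnMatrix_sub_eq_zero_of_not_antitone (N : ℕ) {c : Fin n → ℤ} (hc : Antitone c)
    {E : Finset (Fin n)} (hE : ¬ Antitone fun p => c p - if p ∈ E then 1 else 0) :
    (columnMatrix R N fun p => c p - if p ∈ E then 1 else 0).det = 0 := by
  rcases n with _ | n
  · exact absurd (fun p => p.elim0) hE
  rw [Fin.antitone_iff_succ_le] at hE
  push Not at hE
  obtain ⟨p, hp⟩ := hE
  have hstep := hc (Fin.castSucc_le_succ p)
  refine Matrix.det_zero_of_row_eq (Fin.castSucc_lt_succ (i := p)).ne (funext fun i => ?_)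
  simp only [columnMatrix, Matrix.of_apply, Fin.val_castSucc, Fin.val_succ]
  congr 2
  split_ifs at hp ⊢ <;> push_cast <;> omega

theorem det_columnMatrix (N : ℕ) {c : Fin n → ℤ} (hc : Antitone c) :
    (columnMatrix R N c).det = #(columnFamilies N c) := by
  induction N generalizing c with
  | zero =>
    by_cases hzero : c = 0
    · rw [hzero, det_columnMatrix_zero_zero, columnFamilies_zero_zero, card_singleton, Nat.cast_one]
    · rw [det_columnMatrix_zero_of_ne_zero R hc hzero, columnFamilies_zero_of_ne_zero hzero,
        card_empty, Nat.cast_zero]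
  | succ N ih =>
    rw [det_columnMatrix_succ, card_columnFamilies_succ hc, Nat.cast_sum]
    refine sum_congr rfl fun E _ => ?_
    by_cases hE : Antitone fun p => c p - if p ∈ E then 1 else 0
    · exact ih hE
    · rw [det_columnMatrix_sub_eq_zero_of_not_antitone R N hc hE,
        columnFamilies_eq_empty_of_not_antitone hE, card_empty, Nat.cast_zero]

end Determinant

section Tableaux

/-- `r` and `c` are the row lengths and the column heights of one and the same diagram, whose cells
are the pairs `(j, p)` with `p < r j`, equivalently `j < c p`. -/
structure IsConjugate {m n : ℕ} (r : Fin m → ℕ) (c : Fin n → ℕ) : Prop where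
  row_le : ∀ j, r j ≤ n
  col_le : ∀ p, c p ≤ m
  lt_iff : ∀ (j : Fin m) (p : Fin n), (p : ℕ) < r j ↔ (j : ℕ) < c p

theorem isConjugate_card_filter_lt {m n : ℕ} {c : Fin n → ℕ} (hc : Antitone c)
    (hcm : ∀ p, c p ≤ m) : IsConjugate (fun j : Fin m => #{p | (j : ℕ) < c p}) c where
  row_le _ := card_finset_fin_le _
  col_le := hcm
  lt_iff _ _ := Tuple.lt_card_gt_iff_apply_gt_of_antitone hc

namespace IsConjugate

variable {m n N : ℕ} {r : Fin m → ℕ} {c : Fin n → ℕ}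

theorem symm (h : IsConjugate r c) : IsConjugate c r where
  row_le := h.col_le
  col_le := h.row_le
  lt_iff p j := (h.lt_iff j p).symm

theorem antitone_col (h : IsConjugate r c) : Antitone c := by
  intro p q hpq
  by_contra! hlt
  let j : Fin m := ⟨c p, hlt.trans_le (h.col_le q)⟩
  have hq : (q : ℕ) < r j := (h.lt_iff j q).2 hlt
  exact lt_irrefl (c p) ((h.lt_iff j p).1 (lt_of_le_of_lt hpq hq))

/-- The filling `T`, given row by row, read column by column. -/
def transpose {α : Type*} (h : IsConjugate r c) (T : ∀ j, Fin (r j) → α) (p : Fin n)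
    (x : Fin (c p)) : α :=
  T ⟨x, x.2.trans_le (h.col_le p)⟩ ⟨p, (h.lt_iff _ p).2 x.2⟩

theorem transpose_symm_transpose {α : Type*} (h : IsConjugate r c) (U : ∀ p, Fin (c p) → α) :
    h.transpose (h.symm.transpose U) = U := rfl

theorem isSsyt_iff_transpose (h : IsConjugate r c) {T : ∀ j, Fin (r j) → Fin N} :
    IsSsyt r T ↔ (∀ p, StrictMono (h.transpose T p)) ∧
      ∀ p q, p ≤ q → ∀ (x : Fin (c p)) (y : Fin (c q)), (x : ℕ) = y →
        h.transpose T p x ≤ h.transpose T q y := by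
  constructor
  · rintro ⟨hrow, hcol⟩
    refine ⟨fun p x y hxy => hcol _ _ _ _ hxy rfl, fun p q hpq x y hxy => ?_⟩
    obtain ⟨x, hx⟩ := x
    obtain rfl : x = y := hxy
    exact hrow _ _ _ hpq
  · rintro ⟨hcol, hrow⟩
    refine ⟨fun j p q hpq => ?_, fun j j' p q hj hpq => ?_⟩
    · exact hrow ⟨p, p.2.trans_le (h.row_le j)⟩ ⟨q, q.2.trans_le (h.row_le j)⟩ hpq
        ⟨j, (h.lt_iff j _).1 p.2⟩ ⟨j, (h.lt_iff j _).1 q.2⟩ rfl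
    · obtain ⟨p, hp⟩ := p
      obtain ⟨q, hq⟩ := q
      obtain rfl : p = q := hpq
      have hpn : p < n := hp.trans_le (h.row_le j)
      exact hcol ⟨p, hpn⟩ (a := ⟨j, (h.lt_iff j ⟨p, hpn⟩).1 hp⟩)
        (b := ⟨j', (h.lt_iff j' ⟨p, hpn⟩).1 hq⟩) hj

end IsConjugate

theorem forall_card_filter_lt_le_iff {a b : ℕ} (hba : b ≤ a) {f : Fin a → ℕ} {g : Fin b → ℕ}
    (hf : StrictMono f) (hg : StrictMono g) :
    (∀ t, #{z ∈ univ.image g | z < t} ≤ #{z ∈ univ.image f | z < t}) ↔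
      ∀ (x : Fin a) (y : Fin b), (x : ℕ) = y → f x ≤ g y := by
  simp only [filter_image, card_image_of_injective _ hf.injective,
    card_image_of_injective _ hg.injective]
  constructor
  · intro hcount x y hxy
    have hy : (y : ℕ) < #{i | g i < g y + 1} :=
      (Tuple.lt_card_lt_iff_apply_lt_of_monotone hg.monotone).2 (Nat.lt_succ_self _)
    have hx : f x < g y + 1 := (Tuple.lt_card_lt_iff_apply_lt_of_monotone hf.monotone).1
      (hxy ▸ hy.trans_le (hcount _))
    exact Nat.lt_succ_iff.1 hx
  · intro hle t
    by_contra! hlt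
    have hb : #{i | f i < t} < b := hlt.trans_le (card_finset_fin_le _)
    have hg_lt : g ⟨_, hb⟩ < t := (Tuple.lt_card_lt_iff_apply_lt_of_monotone hg.monotone).1 hlt
    have hf_lt : f ⟨_, hb.trans_le hba⟩ < t := (hle _ _ rfl).trans_lt hg_lt
    exact lt_irrefl _ ((Tuple.lt_card_lt_iff_apply_lt_of_monotone hf.monotone).2 hf_lt)

/-- The sets of entries of the columns of a filling given column by column. -/
def columnSets {n N : ℕ} {c : Fin n → ℕ} (U : ∀ p, Fin (c p) → Fin N) (p : Fin n) : Finset ℕ :=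
  univ.image fun x => (U p x : ℕ)

variable {m n N : ℕ} {r : Fin m → ℕ} {c : Fin n → ℕ}

theorem columnSets_mem_columnFamilies_iff (hc : Antitone c) {U : ∀ p, Fin (c p) → Fin N}
    (hU : ∀ p, StrictMono (U p)) :
    columnSets U ∈ columnFamilies N (fun p => (c p : ℤ)) ↔
      ∀ p q, p ≤ q → ∀ (x : Fin (c p)) (y : Fin (c q)), (x : ℕ) = y → U p x ≤ U q y := by
  have hval : ∀ p, StrictMono fun x => (U p x : ℕ) := fun p _ _ hxy => hU p hxy
  have hsub : ∀ p, columnSets U p ⊆ range N := by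
    simp [columnSets, subset_iff]
  have hcard : ∀ p, (#(columnSets U p) : ℤ) = c p := fun p => by
    rw [columnSets, card_image_of_injective _ (hval p).injective, card_univ, Fintype.card_fin]
  rw [mem_columnFamilies, and_iff_right hsub, and_iff_right hcard]
  refine ⟨fun h p q hpq => ?_, fun h t p q hpq => ?_⟩
  · exact (forall_card_filter_lt_le_iff (hc hpq) (hval p) (hval q)).1 fun t => h t hpq
  · exact (forall_card_filter_lt_le_iff (hc hpq) (hval p) (hval q)).2 (h p q hpq) t

theorem columnSets_injOn :
    Set.InjOn (columnSets (N := N) (c := c)) {U | ∀ p, StrictMono (U p)} := by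
  intro U hU V hV hUV
  funext p
  have hset : Set.range (fun x => (U p x : ℕ)) = Set.range fun x => (V p x : ℕ) := by
    simpa [columnSets] using congrArg (fun A : Finset ℕ => (A : Set ℕ)) (congrFun hUV p)
  have hUmono : StrictMono fun x => (U p x : ℕ) := hU p
  have hVmono : StrictMono fun x => (V p x : ℕ) := hV p
  exact funext fun x => Fin.ext (congrFun ((hUmono.range_inj hVmono).1 hset) x)

theorem exists_columnSets_eq {S : Fin n → Finset ℕ}
    (hS : S ∈ columnFamilies N fun p => (c p : ℤ)) :
    ∃ U : ∀ p, Fin (c p) → Fin N, (∀ p, StrictMono (U p)) ∧ columnSets U = S := by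
  obtain ⟨hsub, hcard, -⟩ := mem_columnFamilies.1 hS
  have hcard' : ∀ p, #(S p) = c p := fun p => by exact_mod_cast hcard p
  refine ⟨fun p x => ⟨(S p).orderEmbOfFin (hcard' p) x,
    mem_range.1 (hsub p (orderEmbOfFin_mem _ _ x))⟩, fun p x y hxy => ?_, funext fun p => ?_⟩
  · exact ((S p).orderEmbOfFin (hcard' p)).strictMono hxy
  · exact image_orderEmbOfFin_univ (S p) (hcard' p)

theorem card_ssytFinset_eq_card_columnFamilies (h : IsConjugate r c) :
    #(ssytFinset N r) = #(columnFamilies N fun p => (c p : ℤ)) := by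
  have hmem : ∀ {T}, T ∈ ssytFinset N r ↔ IsSsyt r T := by simp [ssytFinset]
  refine card_bij (fun T _ => columnSets (h.transpose T)) ?_ ?_ ?_
  · intro T hT
    obtain ⟨hcol, hrow⟩ := h.isSsyt_iff_transpose.1 (hmem.1 hT)
    exact (columnSets_mem_columnFamilies_iff h.antitone_col hcol).2 hrow
  · intro T hT T' hT' hsets
    have hcols : h.transpose T = h.transpose T' := columnSets_injOn
      (h.isSsyt_iff_transpose.1 (hmem.1 hT)).1 (h.isSsyt_iff_transpose.1 (hmem.1 hT')).1 hsets
    rw [← h.symm.transpose_symm_transpose T, hcols, h.symm.transpose_symm_transpose]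
  · intro S hS
    obtain ⟨U, hU, rfl⟩ := exists_columnSets_eq hS
    have hrow := (columnSets_mem_columnFamilies_iff h.antitone_col hU).1 hS
    exact ⟨h.symm.transpose U, hmem.2 (h.isSsyt_iff_transpose.2 ⟨hU, hrow⟩), rfl⟩

end Tableaux

section Partition

variable {n k : ℕ} {l : Fin n → ℕ}

theorem antitone_complement (hl : Antitone l) : Antitone fun p : Fin n => k - l p.rev :=
  fun _ _ hpq => Nat.sub_le_sub_left (hl (Fin.rev_le_rev.2 hpq)) k

theorem isConjugate_complement (hl : Antitone l) :
    IsConjugate (fun j : Fin k => #{i | l i < k - (j : ℕ)}) fun p : Fin n => k - l p.rev := by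
  convert isConjugate_card_filter_lt (antitone_complement hl) fun p => Nat.sub_le k _ using 2 with j
  refine card_equiv Fin.revPerm fun i => ?_
  simp only [mem_filter_univ, Fin.revPerm_apply, Fin.rev_rev]
  omega

theorem det_choose_add_rev_eq_card_ssytFinset (R : Type*) [CommRing R] (hl : Antitone l)
    (hbd : ∀ i, l i ≤ k) :
    Matrix.det (Matrix.of fun i j : Fin n => ((k + (i : ℕ)).choose ((j : ℕ) + l j.rev) : R))
      = #(ssytFinset k fun j : Fin k => #{i | l i < k - (j : ℕ)}) := by
  have hanti : Antitone fun p : Fin n => ((k - l p.rev : ℕ) : ℤ) :=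
    fun _ _ hpq => Nat.cast_le.2 (antitone_complement hl hpq)
  rw [card_ssytFinset_eq_card_columnFamilies (isConjugate_complement hl),
    ← det_columnMatrix R k hanti, ← Matrix.det_transpose]
  congr 1
  ext p i
  have hentry : ((k - l p.rev : ℕ) : ℤ) - p + i = (k + i : ℕ) - (p + l p.rev : ℕ) := by
    have := hbd p.rev
    omega
  simp only [columnMatrix, Matrix.transpose_apply, Matrix.of_apply]
  rw [hentry, chooseInt_sub_natCast]

theorem det_choose_add_rev_eq_prod (K : Type*) [Field K] [CharZero K] (hbd : ∀ i, l i ≤ k) :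
    Matrix.det (Matrix.of fun i j : Fin n => ((k + (i : ℕ)).choose ((j : ℕ) + l j.rev) : K))
      = (∏ m ∈ range n, ((k + m).factorial : K))
        * (∏ i : Fin n, ∏ j ∈ Ioi i,
            ((l i + (n - 1 - (i : ℕ)) : K) - (l j + (n - 1 - (j : ℕ)) : K)))
        / ∏ i : Fin n, ((l i + (n - 1 - (i : ℕ))).factorial : K)
            * ((k + n - 1 - (l i + (n - 1 - (i : ℕ)))).factorial : K) := by
  have hcast : ∀ i : Fin n,
      ((l i + (n - 1 - (i : ℕ)) : ℕ) : K) = l i + ((n : K) - 1 - (i : ℕ)) := by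
    intro i
    rw [Nat.cast_add, Nat.cast_sub (Nat.le_sub_one_of_lt i.isLt), Nat.cast_pred i.pos]
  have hle : ∀ j : Fin n, l j + (n - 1 - (j : ℕ)) ≤ k + n - 1 := fun j => by
    have := hbd j
    omega
  simp only [← hcast]
  rw [← det_choose_rev _ hle, ← Matrix.det_submatrix_equiv_self Fin.revPerm]
  congr 1
  ext i j
  simp only [Matrix.submatrix_apply, Matrix.of_apply, Fin.revPerm_apply, Fin.rev_rev]
  rw [Fin.val_rev j, show n - ((j : ℕ) + 1) + l j = l j + (n - 1 - (j : ℕ)) by omega]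

end Partition

/-- For a partition `λ` inside an `n × k` rectangle (`l i = λ_{i+1}`), the determinant
`M(λ) = det[ C(k+i, j+λ_{n-j}) ]` equals the number of semistandard Young tableaux of
shape `λ̄'` (the conjugate of the complement, `λ̄'_j = #{i : λ_i ≤ k - j}`) with entries
in `{1,…,k}`, and also equals the product formula
`∏_m (k+m)! ∏_{i<j} (a_i - a_j) / ∏_i a_i! (k+n-1-a_i)!` with `a_i = λ_i + n - i`. -/
theorem stmt10 (n k : ℕ) (l : Fin n → ℕ)
    (hl : ∀ i j : Fin n, i ≤ j → l j ≤ l i) (hbd : ∀ i, l i ≤ k) :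
    Matrix.det (Matrix.of fun i j : Fin n =>
        (((k + (i : ℕ)).choose ((j : ℕ) + l j.rev)) : ℚ))
      = ((ssytFinset k (fun j : Fin k =>
          (Finset.univ.filter (fun i : Fin n => (l i : ℕ) < k - (j : ℕ))).card)).card : ℚ)
    ∧ Matrix.det (Matrix.of fun i j : Fin n =>
        (((k + (i : ℕ)).choose ((j : ℕ) + l j.rev)) : ℚ))
      = (∏ m ∈ Finset.range n, ((k + m).factorial : ℚ))
        * (∏ i : Fin n, ∏ j ∈ Finset.Ioi i,
            (((l i + (n - 1 - (i : ℕ))) : ℚ) - ((l j + (n - 1 - (j : ℕ))) : ℚ)))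
        / (∏ i : Fin n, ((l i + (n - 1 - (i : ℕ))).factorial : ℚ)
            * ((k + n - 1 - (l i + (n - 1 - (i : ℕ)))).factorial : ℚ)) := by
  exact ⟨det_choose_add_rev_eq_card_ssytFinset ℚ hl hbd, det_choose_add_rev_eq_prod ℚ hbd⟩

end
end

section
/- Let c > 1 and define ρ(x) on [-√c, √c] by ρ(x) = (1/2π)[arctan((-(c+1)x + 2c)/((c-1)√(c - x²))) + arctan(((c+1)x + 2c)/((c-1)√(c - x²)))] and ρ(x) = 0 for |x| > √c with |x| ≤ (c+1)/2. Then ∫_{-√c}^{√c} ρ(x) dx = 1. -/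
open Real

/-!
Put `a = 2√c / (c + 1)`, so that `√(1 - a²) = (c - 1) / (c + 1)`. After the scaling `x = √c * s`,
each of the two arctangents is, up to `s ↦ -s`, the angle `arcsin ((s + a) / (1 + a * s))`, where
`s ↦ (s + a) / (1 + a * s)` is an automorphism of `[-1, 1]`. In this form the angle is continuous
up to the endpoints, with values `±π / 2`, and its derivative is
`√(1 - a²) / ((1 + a * s) * √(1 - s²))`. Integrating by parts against `1 + a * s` cancels the
linear factor and leaves only an arcsine.
-/

/-- The Möbius transformation `s ↦ (s + a) / (1 + a * s)`, which for `|a| < 1` is the automorphism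
of `[-1, 1]` fixing `±1` and sending `0` to `a`. Where `1 + a * s = 0` it takes the junk value `0`.
-/
noncomputable def mobius (a s : ℝ) : ℝ := (s + a) / (1 + a * s)

section Mobius

variable {a s : ℝ}

lemma mobius_one (ha : a ≠ -1) : mobius a 1 = 1 := by
  have : 1 + a ≠ 0 := by rwa [add_comm, ← sub_neg_eq_add, sub_ne_zero]
  rw [mobius, mul_one, div_self this]

lemma mobius_neg_one (ha : a ≠ 1) : mobius a (-1) = -1 := by
  have : 1 - a ≠ 0 := sub_ne_zero.2 ha.symm
  rw [mobius, mul_neg_one, ← sub_eq_add_neg, div_eq_iff this]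
  ring

lemma one_add_mul_pos (ha : |a| < 1) (hs : |s| ≤ 1) : 0 < 1 + a * s := by
  have : |a * s| < 1 := by
    rw [abs_mul]
    exact mul_lt_one_of_nonneg_of_lt_one_left (abs_nonneg a) ha hs
  linarith [(abs_lt.1 this).1]

lemma one_sub_mobius_sq (h : 1 + a * s ≠ 0) :
    1 - mobius a s ^ 2 = (1 - a ^ 2) * (1 - s ^ 2) / (1 + a * s) ^ 2 := by
  rw [mobius, div_pow, one_sub_div (pow_ne_zero 2 h)]
  ring

lemma sqrt_one_sub_mobius_sq (ha : |a| < 1) (hs : |s| ≤ 1) :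
    √(1 - mobius a s ^ 2) = √(1 - a ^ 2) * √(1 - s ^ 2) / (1 + a * s) := by
  have hpos := one_add_mul_pos ha hs
  have ha' : 0 ≤ 1 - a ^ 2 := sub_nonneg.2 ((sq_le_one_iff_abs_le_one a).2 ha.le)
  rw [one_sub_mobius_sq hpos.ne', sqrt_div' _ (sq_nonneg _), sqrt_mul ha', sqrt_sq hpos.le]

lemma abs_mobius_lt_one (ha : |a| < 1) (hs : |s| < 1) : |mobius a s| < 1 := by
  have hpos := one_add_mul_pos ha hs.le
  have ha' : 0 < 1 - a ^ 2 := sub_pos.2 ((sq_lt_one_iff_abs_lt_one a).2 ha)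
  have hs' : 0 < 1 - s ^ 2 := sub_pos.2 ((sq_lt_one_iff_abs_lt_one s).2 hs)
  rw [← sq_lt_one_iff_abs_lt_one, ← sub_pos, one_sub_mobius_sq hpos.ne']
  positivity

lemma arcsin_mobius_eq_arctan (ha : |a| < 1) (hs : |s| < 1) :
    arcsin (mobius a s) = arctan ((s + a) / (√(1 - a ^ 2) * √(1 - s ^ 2))) := by
  have hpos := one_add_mul_pos ha hs.le
  rw [arcsin_eq_arctan (abs_lt.1 (abs_mobius_lt_one ha hs)), sqrt_one_sub_mobius_sq ha hs.le,
    mobius, div_div_div_cancel_right₀ hpos.ne']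

lemma hasDerivAt_one_add_mul (a s : ℝ) : HasDerivAt (fun t ↦ 1 + a * t) a s := by
  simpa using ((hasDerivAt_id s).const_mul a).const_add 1

lemma hasDerivAt_mobius (h : 1 + a * s ≠ 0) :
    HasDerivAt (mobius a) ((1 - a ^ 2) / (1 + a * s) ^ 2) s := by
  have hnum : HasDerivAt (fun t ↦ t + a) 1 s := (hasDerivAt_id s).add_const a
  refine (hnum.div (hasDerivAt_one_add_mul a s) h).congr_deriv ?_
  ring

lemma continuousOn_mobius (ha : |a| < 1) : ContinuousOn (mobius a) (Set.Icc (-1) 1) :=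
  fun _ hs ↦
    (hasDerivAt_mobius (one_add_mul_pos ha (abs_le.2 hs)).ne').continuousAt.continuousWithinAt

lemma hasDerivAt_arcsin_mobius (ha : |a| < 1) (hs : |s| < 1) :
    HasDerivAt (fun t ↦ arcsin (mobius a t))
      (√(1 - a ^ 2) / ((1 + a * s) * √(1 - s ^ 2))) s := by
  have hpos := one_add_mul_pos ha hs.le
  have ha' : 0 < 1 - a ^ 2 := sub_pos.2 ((sq_lt_one_iff_abs_lt_one a).2 ha)
  have hs' : 0 < √(1 - s ^ 2) := sqrt_pos.2 (sub_pos.2 ((sq_lt_one_iff_abs_lt_one s).2 hs))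
  obtain ⟨hlower, hupper⟩ := abs_lt.1 (abs_mobius_lt_one ha hs)
  refine ((hasDerivAt_arcsin hlower.ne' hupper.ne).comp s
    (hasDerivAt_mobius hpos.ne')).congr_deriv ?_
  rw [sqrt_one_sub_mobius_sq ha hs.le]
  have : √(1 - a ^ 2) ≠ 0 := (sqrt_pos.2 ha').ne'
  field_simp
  exact (sq_sqrt ha'.le).symm

lemma hasDerivAt_mul_arcsin_mobius_sub (ha : |a| < 1) (hs : |s| < 1) :
    HasDerivAt (fun t ↦ (1 + a * t) * arcsin (mobius a t) - √(1 - a ^ 2) * arcsin t)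
      (a * arcsin (mobius a s)) s := by
  have hpos := one_add_mul_pos ha hs.le
  obtain ⟨hlower, hupper⟩ := abs_lt.1 hs
  refine (((hasDerivAt_one_add_mul a s).mul (hasDerivAt_arcsin_mobius ha hs)).sub
    ((hasDerivAt_arcsin hlower.ne' hupper.ne).const_mul √(1 - a ^ 2))).congr_deriv ?_
  field_simp
  ring

lemma mul_integral_arcsin_mobius (ha : |a| < 1) :
    a * ∫ s in (-1)..1, arcsin (mobius a s) = π * (1 - √(1 - a ^ 2)) := by
  have hcont : ContinuousOn (fun s ↦ arcsin (mobius a s)) (Set.Icc (-1) 1) :=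
    continuous_arcsin.comp_continuousOn (continuousOn_mobius ha)
  have hint : IntervalIntegrable (fun s ↦ a * arcsin (mobius a s)) MeasureTheory.volume (-1) 1 :=
    (hcont.const_mul a).intervalIntegrable_of_Icc (by norm_num)
  have hcont_antideriv : ContinuousOn
      (fun s ↦ (1 + a * s) * arcsin (mobius a s) - √(1 - a ^ 2) * arcsin s) (Set.Icc (-1) 1) := by
    fun_prop
  rw [← intervalIntegral.integral_const_mul,
    intervalIntegral.integral_eq_sub_of_hasDerivAt_of_le (by norm_num) hcont_antideriv
      (fun s hs ↦ hasDerivAt_mul_arcsin_mobius_sub ha (abs_lt.2 hs)) hint,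
    mobius_one (abs_lt.1 ha).1.ne', mobius_neg_one (abs_lt.1 ha).2.ne, arcsin_neg, arcsin_one]
  ring

lemma mul_integral_arctan_add_div_sqrt (ha : |a| < 1) :
    a * ∫ s in (-1)..1, arctan ((s + a) / (√(1 - a ^ 2) * √(1 - s ^ 2)))
      = π * (1 - √(1 - a ^ 2)) := by
  rw [← mul_integral_arcsin_mobius ha]
  congr 1
  refine intervalIntegral.integral_congr_Ioo_of_le (by norm_num) fun s hs ↦ ?_
  exact (arcsin_mobius_eq_arctan ha (abs_lt.2 hs)).symm

end Mobius

lemma intervalIntegrable_arctan_comp {μ : MeasureTheory.Measure ℝ}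
    [MeasureTheory.IsLocallyFiniteMeasure μ] {f : ℝ → ℝ} (hf : Measurable f) (u v : ℝ) :
    IntervalIntegrable (fun x ↦ arctan (f x)) μ u v := by
  refine (intervalIntegrable_const (c := π / 2)).mono_fun
    (measurable_arctan.comp hf).aestronglyMeasurable (.of_forall fun x ↦ ?_)
  beta_reduce
  rw [norm_eq_abs, norm_of_nonneg (by positivity)]
  exact abs_le.2 ⟨(neg_pi_div_two_lt_arctan _).le, (arctan_lt_pi_div_two _).le⟩

lemma sqrt_one_sub_two_mul_div_sq_add_one_sq {r : ℝ} (hr : 1 ≤ r) :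
    √(1 - (2 * r / (r ^ 2 + 1)) ^ 2) = (r ^ 2 - 1) / (r ^ 2 + 1) := by
  have hr' : 0 ≤ r ^ 2 - 1 := by nlinarith
  rw [← sqrt_sq (div_nonneg hr' (by positivity : 0 ≤ r ^ 2 + 1))]
  congr 1
  field_simp
  ring

lemma abs_two_mul_div_sq_add_one_lt_one {r : ℝ} (hr : 1 < r) : |2 * r / (r ^ 2 + 1)| < 1 := by
  rw [abs_of_nonneg (by positivity), div_lt_one (by positivity)]
  nlinarith [sq_pos_of_pos (sub_pos.2 hr)]

/-- The angle whose values at `x` and `-x` add up to `2 * π` times the limit density at `x`. At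
`x = ±√c` the quotient is `_ / 0 = 0`, so the value there is `0` rather than the limit, which is
`±π / 2` when `1 < c`. -/
noncomputable def densityAngle (c x : ℝ) : ℝ :=
  arctan (((c + 1) * x + 2 * c) / ((c - 1) * √(c - x ^ 2)))

lemma intervalIntegrable_densityAngle (c u v : ℝ) :
    IntervalIntegrable (densityAngle c) MeasureTheory.volume u v :=
  intervalIntegrable_arctan_comp (by fun_prop) u v

lemma densityAngle_sq_mul {r : ℝ} (hr : 1 ≤ r) (s : ℝ) :
    densityAngle (r ^ 2) (r * s) =
      arctan ((s + 2 * r / (r ^ 2 + 1)) /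
        (√(1 - (2 * r / (r ^ 2 + 1)) ^ 2) * √(1 - s ^ 2))) := by
  have hr0 : 0 < r := by linarith
  have hfactor : r ^ 2 - (r * s) ^ 2 = r ^ 2 * (1 - s ^ 2) := by ring
  rw [densityAngle, sqrt_one_sub_two_mul_div_sq_add_one_sq hr, hfactor,
    sqrt_mul (sq_nonneg r), sqrt_sq hr0.le]
  congr 1
  field_simp

lemma integral_densityAngle_sq {r : ℝ} (hr : 1 < r) :
    ∫ x in (-r)..r, densityAngle (r ^ 2) x = π := by
  have : 0 < r := by linarith
  have hscaled := mul_integral_arctan_add_div_sqrt (abs_two_mul_div_sq_add_one_lt_one hr)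
  simp only [← densityAngle_sq_mul hr.le] at hscaled
  rw [sqrt_one_sub_two_mul_div_sq_add_one_sq hr.le] at hscaled
  calc ∫ x in (-r)..r, densityAngle (r ^ 2) x
      = r * ∫ s in (-1)..1, densityAngle (r ^ 2) (r * s) := by
        rw [intervalIntegral.mul_integral_comp_mul_left, mul_neg_one, mul_one]
    _ = π := by
        field_simp at hscaled
        linarith

lemma integral_densityAngle {c : ℝ} (hc : 1 < c) :
    ∫ x in (-√c)..(√c), densityAngle c x = π := by
  have hr : 1 < √c := by rwa [lt_sqrt zero_le_one, one_pow]
  simpa only [sq_sqrt (zero_le_one.trans hc.le)] using integral_densityAngle_sq hr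

lemma integral_densityAngle_neg {c : ℝ} (hc : 1 < c) :
    ∫ x in (-√c)..(√c), densityAngle c (-x) = π := by
  rw [intervalIntegral.integral_comp_neg, neg_neg, integral_densityAngle hc]

/-- The limit density of the `(GL_n, GL_k)` skew Howe measure integrates to `1`:
for `c > 1`, with
`ρ(x) = (1/2π)(arctan((-(c+1)x+2c)/((c-1)√(c-x²))) + arctan(((c+1)x+2c)/((c-1)√(c-x²))))`,
one has `∫_{-√c}^{√c} ρ(x) dx = 1`. -/
theorem stmt18 (c : ℝ) (hc : 1 < c) :
    ∫ x in (-Real.sqrt c)..(Real.sqrt c),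
      (1 / (2 * Real.pi))
        * (Real.arctan ((-(c + 1) * x + 2 * c) / ((c - 1) * Real.sqrt (c - x ^ 2)))
          + Real.arctan (((c + 1) * x + 2 * c) / ((c - 1) * Real.sqrt (c - x ^ 2))))
      = 1 := by
  have hint := intervalIntegrable_densityAngle c (-√c) √c
  have hint_neg :
      IntervalIntegrable (fun x ↦ densityAngle c (-x)) MeasureTheory.volume (-√c) √c := by
    simpa only [neg_neg] using (IntervalIntegrable.iff_comp_neg).1 hint.symm
  calc _ = ∫ x in (-√c)..(√c), 1 / (2 * π) * (densityAngle c (-x) + densityAngle c x) := by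
        simp only [densityAngle, neg_sq, mul_neg, neg_mul]
    _ = 1 / (2 * π) * (π + π) := by
        rw [intervalIntegral.integral_const_mul, intervalIntegral.integral_add hint_neg hint,
          integral_densityAngle_neg hc, integral_densityAngle hc]
    _ = 1 := by
        field_simp
        norm_num
end
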